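/- arXiv:2209.15394 — 4 statements merged into one kernel-verified Lean document; each statement's English description precedes it below -/
import Mathlib

section
/- Assume that every connected topological fractal contains a self-regenerating fractal with nonempty interior, and assume that every Peano continuum containing a self-regenerating fractal with nonempty interior is a topological fractal. Then every Peano continuum is a topological fractal. -/
/-- A family `F` of self-maps of a metric space `X` is topologically contractive if for
every `ε > 0` there is `k` such that every composition of `k` maps from `F` has image of
diameter less than `ε`. -/
def TopContractive {X : Type*} [MetricSpace X] (F : Set (X → X)) : Prop :=
  ∀ ε > (0 : ℝ), ∃ k : ℕ, ∀ l : List (X → X), (∀ f ∈ l, f ∈ F) → l.length = k →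
    Metric.diam (Set.range (l.foldr (· ∘ ·) id)) < ε

/-- `X` is a topological fractal if some finite topologically contractive family of
continuous self-maps of `X` has images covering `X`. -/
def IsTopFractal (X : Type*) [MetricSpace X] : Prop :=
  ∃ F : Set (X → X), F.Finite ∧ (∀ f ∈ F, Continuous f) ∧
    TopContractive F ∧ (⋃ f ∈ F, Set.range f) = Set.univ

/-- A metric space `A` is a self-regenerating fractal if for every nonempty open
`U ⊆ A` there is a finite topologically contractive family of continuous self-maps of
`A`, each constant outside `U`, whose images cover `A`. -/
def SelfRegenFractal (A : Type*) [MetricSpace A] : Prop :=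
  ∀ U : Set A, IsOpen U → U.Nonempty →
    ∃ F : Set (A → A), F.Finite ∧ (∀ f ∈ F, Continuous f) ∧
      (∀ f ∈ F, ∀ x y, x ∉ U → y ∉ U → f x = f y) ∧
      TopContractive F ∧ (⋃ f ∈ F, Set.range f) = Set.univ

/-!
Attach an interval to a Peano continuum `X` at a point `x₀`, obtaining a Peano continuum `Z` that
contains a self-regenerating fractal with nonempty interior, namely the interval. So `Z` is a
topological fractal, by maps `φ i`, and it retracts onto `X` by a map `q`. Fix a point `d` of `Z`
and attach to `Z` a copy of `X` at `φ w d` for every finite word `w`, letting the copies shrink.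
The resulting continuum is again a topological fractal: each `φ i` extends to it by moving the copy
at `w` to the copy at `iw`, and the copy at the empty word is the image of `Z` under `q`. The points
`φ w d` accumulate everywhere in `Z`, so the copies of `X` meet every nonempty open set. Hence a
self-regenerating fractal with nonempty interior in this continuum, which exists by assumption, is
mapped by the retraction to some copy of `X` onto a set with nonempty interior. This retraction is
injective away from the fiber of `x₀`. Its image inherits self-regeneration unless `x₀` is isolated
in it; in that case the fiber of `x₀` is clopen and can be sent to another point of `X`.
-/

open Set Filter Function Topology Uniformity

section Words

variable {ι κ X Y M N : Type*}

/-- The composition of the maps `φ i` along a word in the alphabet `ι`, the first letter being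
applied last. -/
def wordMap (φ : ι → X → X) : List ι → X → X
  | [] => id
  | i :: w => φ i ∘ wordMap φ w

theorem wordMap_cons_apply (φ : ι → X → X) (i : ι) (w : List ι) (x : X) :
    wordMap φ (i :: w) x = φ i (wordMap φ w x) := rfl

theorem foldr_comp_map_eq_wordMap (φ : ι → X → X) (w : List ι) :
    (w.map φ).foldr (· ∘ ·) id = wordMap φ w := by
  induction w with
  | nil => rfl
  | cons i w ih => rw [List.map_cons, List.foldr_cons, ih, wordMap]

theorem wordMap_append (φ : ι → X → X) (v w : List ι) :
    wordMap φ (v ++ w) = wordMap φ v ∘ wordMap φ w := by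
  induction v with
  | nil => rfl
  | cons i v ih => rw [List.cons_append, wordMap, wordMap, ih, comp_assoc]

theorem exists_mem_range_wordMap {φ : ι → X → X} (hφ : ∀ x, ∃ i, x ∈ range (φ i)) (n : ℕ) (x : X) :
    ∃ w : List ι, w.length = n ∧ x ∈ range (wordMap φ w) := by
  induction n generalizing x with
  | zero => exact ⟨[], rfl, x, rfl⟩
  | succ n ih =>
    obtain ⟨i, y, rfl⟩ := hφ x
    obtain ⟨w, hw, z, rfl⟩ := ih y
    exact ⟨i :: w, by rw [List.length_cons, hw], z, rfl⟩

theorem semiconj_wordMap {φ : ι → X → X} {ψ : ι → Y → Y} {ρ : X → Y}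
    (h : ∀ i, Semiconj ρ (φ i) (ψ i)) (w : List ι) :
    Semiconj ρ (wordMap φ w) (wordMap ψ w) := by
  induction w with
  | nil => exact Semiconj.id_right
  | cons i w ih => exact (h i).comp_right ih

theorem wordMap_option_elim_const (φ : ι → X → X) (d : X) (w : List (Option ι)) :
    (∃ z, wordMap (fun a : Option ι => a.elim (const X d) φ) w = const X z) ∨
      ∃ v : List ι, v.length = w.length ∧
        wordMap (fun a : Option ι => a.elim (const X d) φ) w = wordMap φ v := by
  induction w with
  | nil => exact .inr ⟨[], rfl, rfl⟩
  | cons a w ih =>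
    rcases a with _ | i
    · exact .inl ⟨d, rfl⟩
    · obtain ⟨z, hz⟩ | ⟨v, hv, h⟩ := ih
      · exact .inl ⟨φ i z, by rw [wordMap, hz]; rfl⟩
      · exact .inr ⟨i :: v, by simp [hv], by rw [wordMap, h]; rfl⟩

/-- The observable `p` contracts along words in the system `φ`: the values of `p ∘ wordMap φ w`
are uniformly close to each other as the length of `w` tends to infinity. For `p = id` this is
topological contractivity (`topContractive_range_iff`); general `p` allows to check contractivity
on one coordinate at a time. -/
def WordContracting [UniformSpace M] (φ : ι → X → X) (p : X → M) : Prop :=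
  Tendsto (fun q : List ι × X × X => (p (wordMap φ q.1 q.2.1), p (wordMap φ q.1 q.2.2)))
    (comap (fun q => q.1.length) atTop) (𝓤 M)

theorem wordContracting_iff_of_hasBasis [UniformSpace M] {φ : ι → X → X} {p : X → M} {β : Type*}
    {P : β → Prop} {V : β → Set (M × M)} (hV : (𝓤 M).HasBasis P V) :
    WordContracting φ p ↔ ∀ b, P b → ∃ k, ∀ w : List ι, k ≤ w.length →
      ∀ x y, (p (wordMap φ w x), p (wordMap φ w y)) ∈ V b := by
  refine ((atTop_basis.comap _).tendsto_iff hV).trans ?_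
  simp only [Prod.forall, true_and, mem_preimage, mem_Ici, imp_forall_iff]

theorem wordContracting_iff [UniformSpace M] {φ : ι → X → X} {p : X → M} :
    WordContracting φ p ↔ ∀ V ∈ 𝓤 M, ∃ k, ∀ w : List ι, k ≤ w.length →
      ∀ x y, (p (wordMap φ w x), p (wordMap φ w y)) ∈ V :=
  wordContracting_iff_of_hasBasis (𝓤 M).basis_sets

theorem wordContracting_const [UniformSpace M] (φ : ι → X → X) (c : M) :
    WordContracting φ (fun _ => c) :=
  wordContracting_iff.2 fun _ hV => ⟨0, fun _ _ _ _ => refl_mem_uniformity hV⟩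

namespace WordContracting

variable [UniformSpace M] [UniformSpace N]

theorem uniformContinuous_comp {φ : ι → X → X} {p : X → M} (h : WordContracting φ p) {g : M → N}
    (hg : UniformContinuous g) : WordContracting φ (g ∘ p) :=
  Tendsto.comp hg h

theorem comp_semiconj {φ : ι → X → X} {ψ : ι → Y → Y} {ρ : X → Y} {p : Y → M}
    (h : WordContracting ψ p) (hρ : ∀ i, Semiconj ρ (φ i) (ψ i)) : WordContracting φ (p ∘ ρ) := by
  refine wordContracting_iff.2 fun V hV => ?_
  obtain ⟨k, hk⟩ := wordContracting_iff.1 h V hV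
  refine ⟨k, fun w hw x y => ?_⟩
  simpa only [comp_apply, (semiconj_wordMap hρ w).eq] using hk w hw (ρ x) (ρ y)

theorem of_comp_semiconj {φ : ι → X → X} {ψ : ι → Y → Y} {ρ : X → Y} {p : Y → M}
    (h : WordContracting φ (p ∘ ρ)) (hρ : ∀ i, Semiconj ρ (φ i) (ψ i)) (hsurj : Surjective ρ) :
    WordContracting ψ p := by
  refine wordContracting_iff.2 fun V hV => ?_
  obtain ⟨k, hk⟩ := wordContracting_iff.1 h V hV
  refine ⟨k, fun w hw => hsurj.forall₂.2 fun x y => ?_⟩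
  simpa only [comp_apply, (semiconj_wordMap hρ w).eq] using hk w hw x y

theorem option_elim_const {φ : ι → X → X} {p : X → M} (h : WordContracting φ p) (d : X) :
    WordContracting (fun a : Option ι => a.elim (const X d) φ) p := by
  refine wordContracting_iff.2 fun V hV => ?_
  obtain ⟨k, hk⟩ := wordContracting_iff.1 h V hV
  refine ⟨k, fun w hw x y => ?_⟩
  obtain ⟨z, hz⟩ | ⟨v, hv, h⟩ := wordMap_option_elim_const φ d w
  · rw [hz]
    exact refl_mem_uniformity hV
  · rw [h]
    exact hk v (hw.trans_eq hv.symm) x y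

theorem of_forall_comp [Finite ι] {φ : ι → X → X} {p : X → M}
    (h : ∀ i, WordContracting φ (p ∘ φ i)) : WordContracting φ p := by
  refine wordContracting_iff.2 fun V hV => ?_
  choose k hk using fun i => wordContracting_iff.1 (h i) V hV
  obtain ⟨K, hK⟩ := (finite_range k).bddAbove
  refine ⟨K + 1, fun w hw x y => ?_⟩
  rcases w with _ | ⟨i, w⟩
  · simp at hw
  · exact hk i w ((hK (mem_range_self i)).trans (Nat.le_of_succ_le_succ hw)) x y

end WordContracting

theorem wordContracting_prodMk_iff [UniformSpace M] [UniformSpace N] {φ : ι → X → X} {p : X → M}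
    {q : X → N} :
    WordContracting φ (fun x => (p x, q x)) ↔ WordContracting φ p ∧ WordContracting φ q := by
  simp only [WordContracting, uniformity_prod, tendsto_inf, tendsto_comap_iff, comp_def]

theorem wordContracting_pi_iff {M : κ → Type*} [∀ j, UniformSpace (M j)] {φ : ι → X → X}
    {p : X → ∀ j, M j} : WordContracting φ p ↔ ∀ j, WordContracting φ (fun x => p x j) := by
  simp only [WordContracting, Pi.uniformity, tendsto_iInf, tendsto_comap_iff, comp_def]

theorem wordContracting_comp_iff_of_isUniformInducing [UniformSpace M] [UniformSpace N]
    {φ : ι → X → X} {p : X → M} {g : M → N} (hg : IsUniformInducing g) :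
    WordContracting φ (g ∘ p) ↔ WordContracting φ p := by
  simp only [WordContracting, ← hg.comap_uniformity, tendsto_comap_iff, comp_def]

theorem wordContracting_id_of_lipschitzWith [PseudoMetricSpace X] [BoundedSpace X]
    {φ : ι → X → X} {K : NNReal} (hK : K < 1) (hφ : ∀ i, LipschitzWith K (φ i)) :
    WordContracting φ id := by
  have hword : ∀ w : List ι, LipschitzWith (K ^ w.length) (wordMap φ w) := by
    intro w
    induction w with
    | nil => exact LipschitzWith.id
    | cons i w ih => simpa only [List.length_cons, pow_succ', wordMap] using (hφ i).comp ih
  have hlim : Tendsto (fun n => (K : ℝ) ^ n * Metric.diam (univ : Set X)) atTop (𝓝 0) := by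
    simpa only [zero_mul] using
      (tendsto_pow_atTop_nhds_zero_of_lt_one K.coe_nonneg hK).mul_const _
  refine (wordContracting_iff_of_hasBasis Metric.uniformity_basis_dist).2 fun ε hε => ?_
  obtain ⟨k, hk⟩ := eventually_atTop.1 (hlim.eventually_lt_const hε)
  refine ⟨k, fun w hw x y => ?_⟩
  calc dist (wordMap φ w x) (wordMap φ w y) ≤ (K ^ w.length : NNReal) * dist x y :=
        (hword w).dist_le_mul x y
    _ ≤ (K : ℝ) ^ w.length * Metric.diam (univ : Set X) := by
        rw [NNReal.coe_pow]
        gcongr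
        exact Metric.dist_le_diam_of_mem (Bornology.IsBounded.all _) trivial trivial
    _ < ε := hk _ hw

theorem topContractive_range_iff [MetricSpace X] [BoundedSpace X] (φ : ι → X → X) :
    TopContractive (range φ) ↔ WordContracting φ id := by
  rw [wordContracting_iff_of_hasBasis Metric.uniformity_basis_dist]
  constructor
  · intro h ε hε
    obtain ⟨k, hk⟩ := h ε hε
    refine ⟨k, fun w hw x y => ?_⟩
    have hdiam := hk ((w.take k).map φ) (List.forall_mem_map.2 fun i _ => mem_range_self i)
      (by simpa using hw)
    rw [foldr_comp_map_eq_wordMap] at hdiam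
    rw [← List.take_append_drop k w, wordMap_append]
    exact (Metric.dist_le_diam_of_mem (Bornology.IsBounded.all _)
      (mem_range_self (wordMap φ (w.drop k) x))
      (mem_range_self (wordMap φ (w.drop k) y))).trans_lt hdiam
  · intro h ε hε
    obtain ⟨k, hk⟩ := h (ε / 2) (half_pos hε)
    refine ⟨k, fun l hl hlk => ?_⟩
    obtain ⟨w, rfl⟩ : l ∈ range (List.map φ) := by rwa [range_list_map]
    rw [foldr_comp_map_eq_wordMap]
    refine (Metric.diam_le_of_forall_dist_le (half_pos hε).le ?_).trans_lt (half_lt_self hε)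
    rintro _ ⟨x, rfl⟩ _ ⟨y, rfl⟩
    exact (hk w (by simpa using hlk.ge) x y).le

end Words

section FractalSystems

variable {ι X : Type*}

/-- A fractal system on `X` is an indexed family of continuous self-maps that is contractive and
whose images cover `X`. A compact metric space is a topological fractal precisely when it carries
a finite fractal system. -/
structure IsFractalSystem [UniformSpace X] (φ : ι → X → X) : Prop where
  continuous : ∀ i, Continuous (φ i)
  wordContracting : WordContracting φ id
  cover : ∀ x, ∃ i, x ∈ range (φ i)

theorem isFractalSystem_iff_range [MetricSpace X] [BoundedSpace X] {φ : ι → X → X} :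
    IsFractalSystem φ ↔ (∀ f ∈ range φ, Continuous f) ∧ TopContractive (range φ) ∧
      ⋃ f ∈ range φ, range f = univ := by
  rw [forall_mem_range, topContractive_range_iff, biUnion_range, eq_univ_iff_forall]
  simp only [mem_iUnion]
  exact ⟨fun h => ⟨h.1, h.2, h.3⟩, fun h => ⟨h.1, h.2.1, h.2.2⟩⟩

theorem IsFractalSystem.isTopFractal [MetricSpace X] [BoundedSpace X] [Finite ι] {φ : ι → X → X}
    (h : IsFractalSystem φ) : IsTopFractal X :=
  ⟨range φ, finite_range φ, isFractalSystem_iff_range.1 h⟩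

theorem IsTopFractal.exists_isFractalSystem [MetricSpace X] [BoundedSpace X]
    (h : IsTopFractal X) : ∃ n, ∃ φ : Fin n → X → X, IsFractalSystem φ := by
  obtain ⟨F, hfin, hF⟩ := h
  obtain ⟨n, φ, -, rfl⟩ := hfin.fin_param
  exact ⟨n, φ, isFractalSystem_iff_range.2 hF⟩

theorem isTopFractal_of_subsingleton (X : Type*) [MetricSpace X] [Subsingleton X] :
    IsTopFractal X :=
  IsFractalSystem.isTopFractal (φ := fun _ : Unit => id)
    { continuous := fun _ => continuous_id
      wordContracting := wordContracting_iff.2 fun V hV => ⟨0, fun w _ x y => by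
        rw [Subsingleton.elim x y]
        exact refl_mem_uniformity hV⟩
      cover := fun x => ⟨(), x, rfl⟩ }

theorem selfRegenFractal_iff [MetricSpace X] [BoundedSpace X] :
    SelfRegenFractal X ↔ ∀ U : Set X, IsOpen U → U.Nonempty →
      ∃ n, ∃ φ : Fin n → X → X, IsFractalSystem φ ∧ ∀ i, ∀ x ∉ U, ∀ y ∉ U, φ i x = φ i y := by
  refine forall₃_congr fun U _ _ => ⟨?_, ?_⟩
  · rintro ⟨F, hfin, hcont, hconst, hF⟩
    obtain ⟨n, φ, -, rfl⟩ := hfin.fin_param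
    exact ⟨n, φ, isFractalSystem_iff_range.2 ⟨hcont, hF⟩,
      fun i x hx y hy => hconst _ (mem_range_self i) x y hx hy⟩
  · rintro ⟨n, φ, hφ, hconst⟩
    obtain ⟨hcont, hF⟩ := isFractalSystem_iff_range.1 hφ
    exact ⟨range φ, finite_range φ, hcont,
      forall_mem_range.2 fun i x y hx hy => hconst i x hx y hy, hF⟩

theorem IsFractalSystem.mapClusterPt_wordMap [UniformSpace X] {φ : ι → X → X}
    (h : IsFractalSystem φ) (d z : X) : MapClusterPt z cofinite (fun w => wordMap φ w d) := by
  choose w hlength y hy using fun n => exists_mem_range_wordMap h.cover n z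
  have hw : Injective w := LeftInverse.injective hlength
  have hpair : Tendsto (fun n => (w n, y n, d)) atTop (comap (fun q => q.1.length) atTop) := by
    simpa only [tendsto_comap_iff, comp_def, hlength] using! tendsto_id
  have hlim := h.wordContracting.comp hpair
  simp only [comp_def, id, hy] at hlim
  exact (Uniform.tendsto_nhds_right.2 hlim).mapClusterPt.of_comp
    (Nat.cofinite_eq_atTop ▸ hw.tendsto_cofinite)

end FractalSystems

section SelfRegeneration

theorem isClopen_fiber_of_notMem_closure {A X : Type*} [TopologicalSpace A]
    [TopologicalSpace X] [T1Space X] {r : A → X} (hr : Continuous r) {b : X}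
    (hb : b ∉ closure (range r \ {b})) : IsClopen (r ⁻¹' {b}) := by
  refine ⟨isClosed_singleton.preimage hr, ?_⟩
  convert isClosed_closure.isOpen_compl.preimage hr (t := (closure (range r \ {b}))ᶜ) using 1
  ext a
  refine ⟨fun h => ?_, fun h => by_contra fun hne => h (subset_closure ⟨mem_range_self a, hne⟩)⟩
  rwa [mem_preimage, mem_singleton_iff.1 h]

variable {A B X : Type*} [MetricSpace A] [CompactSpace A]

theorem SelfRegenFractal.of_surjective [MetricSpace B] (hA : SelfRegenFractal A) {ρ : A → B}
    (hρ : Continuous ρ) (hsurj : Surjective ρ) {E : Set B} (hE : IsOpen E) (hdense : Dense E)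
    (hinj : ∀ x y, ρ x ∈ E → ρ x = ρ y → x = y) : SelfRegenFractal B := by
  have : CompactSpace B := hsurj.compactSpace hρ
  refine selfRegenFractal_iff.2 fun U hU hUne => ?_
  have hV : (ρ ⁻¹' (U ∩ E)).Nonempty := (hdense.inter_open_nonempty U hU hUne).preimage hsurj
  obtain ⟨n, φ, hφ, hconst⟩ := selfRegenFractal_iff.1 hA _ ((hU.inter hE).preimage hρ) hV
  let s : B → A := surjInv hsurj
  have hs : ∀ b, ρ (s b) = b := surjInv_eq hsurj
  have hfiber : ∀ i x, φ i (s (ρ x)) = φ i x := by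
    intro i x
    by_cases hx : ρ x ∈ E
    · rw [hinj x (s (ρ x)) hx (hs (ρ x)).symm, hs]
    · exact hconst i _ (fun h => hx (hs (ρ x) ▸ h.2)) _ fun h => hx h.2
  have hsemiconj : ∀ i, Semiconj ρ (φ i) (ρ ∘ φ i ∘ s) := fun i x =>
    congrArg ρ (hfiber i x).symm
  refine ⟨n, fun i => ρ ∘ φ i ∘ s, ⟨fun i => ?_, ?_, fun b => ?_⟩, fun i x hx y hy => ?_⟩
  · refine (hρ.isClosedMap.isQuotientMap hρ hsurj).continuous_iff.2 ?_
    rw [← (hsemiconj i).comp_eq]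
    exact hρ.comp (hφ.continuous i)
  · exact WordContracting.of_comp_semiconj (p := id) (ρ := ρ)
      (hφ.wordContracting.uniformContinuous_comp
        (CompactSpace.uniformContinuous_of_continuous hρ)) hsemiconj hsurj
  · obtain ⟨i, x, hx⟩ := hφ.cover (s b)
    exact ⟨i, ρ x, by rw [← hsemiconj i x, hx, hs]⟩
  · exact congrArg ρ (hconst i _ (fun h => hx (hs x ▸ h.1)) _ fun h => hy (hs y ▸ h.1))

theorem SelfRegenFractal.range_of_injective [MetricSpace X] (hA : SelfRegenFractal A) {r : A → X}
    (hr : Continuous r) (hinj : Injective r) : SelfRegenFractal (range r) :=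
  hA.of_surjective hr.rangeFactorization rangeFactorization_surjective isOpen_univ dense_univ
    fun _ _ _ h => hinj (congrArg Subtype.val h)

theorem SelfRegenFractal.range_of_injective_off_point [MetricSpace X] (hA : SelfRegenFractal A)
    {r : A → X} (hr : Continuous r) {b : X} (hinj : ∀ x y, r x ≠ b → r x = r y → x = y)
    (hb : b ∈ closure (range r \ {b})) : SelfRegenFractal (range r) := by
  refine hA.of_surjective hr.rangeFactorization rangeFactorization_surjective
    (E := Subtype.val ⁻¹' {b}ᶜ) (isOpen_compl_singleton.preimage continuous_subtype_val)
    (fun p => ?_) fun x y hx h => hinj x y hx (congrArg Subtype.val h)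
  rw [closure_subtype, Subtype.image_preimage_coe, ← sdiff_eq]
  by_cases hp : p.1 = b
  · rwa [hp]
  · exact subset_closure ⟨p.2, hp⟩

theorem SelfRegenFractal.exists_of_injective_off_point [MetricSpace X] [ConnectedSpace X]
    [Nontrivial X] (hA : SelfRegenFractal A) {r : A → X} (hr : Continuous r) {b : X}
    (hinj : ∀ x y, r x ≠ b → r x = r y → x = y) {W : Set X} (hW : IsOpen W) (hne : W.Nonempty)
    (hb : b ∉ W) (hWr : W ⊆ range r) :
    ∃ R : Set X, IsCompact R ∧ SelfRegenFractal R ∧ (interior R).Nonempty := by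
  classical
  suffices ∃ (c : X) (s : A → X), Continuous s ∧ (∀ x y, s x ≠ c → s x = s y → x = y) ∧
      W ⊆ range s ∧ c ∈ closure (range s \ {c}) by
    obtain ⟨c, s, hs, hsinj, hWs, hc⟩ := this
    exact ⟨range s, isCompact_range hs, hA.range_of_injective_off_point hs hsinj hc,
      hne.mono (interior_maximal hWs hW)⟩
  by_cases hcl : b ∈ closure (range r \ {b})
  · exact ⟨b, r, hr, hinj, hWr, hcl⟩
  -- Now `r ⁻¹' {b}` is clopen, so it can be sent to a point of `W` instead.
  obtain ⟨c, hc⟩ := hne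
  let s : A → X := (r ⁻¹' {b}).piecewise (fun _ => c) r
  have hs : Continuous s := continuous_const.piecewise
    (by simp [(isClopen_fiber_of_notMem_closure hr hcl).frontier_eq]) hr
  have hs_of_ne : ∀ {a}, r a ≠ b → s a = r a := fun h => piecewise_eq_of_notMem _ _ _ h
  have hr_ne : ∀ {a}, s a ≠ c → r a ≠ b := fun h ha => h (piecewise_eq_of_mem _ _ _ ha)
  have hWs : W ⊆ range s := by
    intro x hx
    obtain ⟨a, rfl⟩ := hWr hx
    exact ⟨a, hs_of_ne fun h => hb (h ▸ hx)⟩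
  refine ⟨c, s, hs, fun x y hx hxy => ?_, hWs, ?_⟩
  · have hrx := hr_ne hx
    have hry := hr_ne (hxy ▸ hx)
    exact hinj x y hrx (by rwa [hs_of_ne hrx, hs_of_ne hry] at hxy)
  · have hcW : c ∈ closure (W \ {c}) := by
      rw [mem_closure_iff_nhdsWithin_neBot, sdiff_eq, inter_comm,
        nhdsWithin_inter_of_mem' (mem_nhdsWithin_of_mem_nhds (hW.mem_nhds hc))]
      infer_instance
    exact closure_mono (sdiff_subset_sdiff_left hWs) hcW

theorem selfRegenFractal_of_lipschitz
    (hcover : ∀ ε : NNReal, 0 < ε → ∃ n, ∃ φ : Fin n → A → A, (∀ i, LipschitzWith ε (φ i)) ∧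
      ∀ x, ∃ i, x ∈ range (φ i))
    (hconst : ∀ U : Set A, IsOpen U → U.Nonempty → ∃ (K : NNReal) (g : A → A),
      LipschitzWith K g ∧ Surjective g ∧ ∀ x ∉ U, ∀ y ∉ U, g x = g y) :
    SelfRegenFractal A := by
  refine selfRegenFractal_iff.2 fun U hU hne => ?_
  obtain ⟨K, g, hg, hsurj, hgU⟩ := hconst U hU hne
  obtain ⟨n, φ, hφ, hφcover⟩ := hcover (2 * (K + 1))⁻¹ (by positivity)
  have hlip : ∀ i, LipschitzWith ((2 * (K + 1))⁻¹ * K) (φ i ∘ g) := fun i => (hφ i).comp hg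
  refine ⟨n, fun i => φ i ∘ g, ⟨fun i => (hlip i).continuous, ?_, fun x => ?_⟩,
    fun i x hx y hy => congrArg (φ i) (hgU x hx y hy)⟩
  · refine wordContracting_id_of_lipschitzWith ?_ hlip
    rw [inv_mul_lt_one₀ (by positivity)]
    linarith [K.2]
  · obtain ⟨i, y, hy⟩ := hφcover x
    obtain ⟨z, rfl⟩ := hsurj y
    exact ⟨i, z, hy⟩

end SelfRegeneration

section UnitInterval

open unitInterval

theorem exists_lipschitzWith_surjective_unitInterval {X : Type*} [MetricSpace X] [ConnectedSpace X]
    [Nontrivial X] {U : Set X} (hU : IsOpen U) (hne : U.Nonempty) :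
    ∃ (K : NNReal) (g : X → I), LipschitzWith K g ∧ Surjective g ∧ ∀ x ∉ U, g x = 0 := by
  obtain ⟨m, hm⟩ := hne
  obtain ⟨m', hm'⟩ := exists_ne m
  obtain ⟨ε, hε, hball⟩ := Metric.isOpen_iff.1 hU m hm
  let δ : ℝ := min ε (dist m' m)
  have hδ : 0 < δ := lt_min hε (dist_pos.2 hm')
  let g : X → I := fun x => projIcc 0 1 zero_le_one (1 - dist x m / δ)
  have hg : LipschitzWith (1 * δ⁻¹.toNNReal) g := by
    refine (LipschitzWith.projIcc _).comp (LipschitzWith.of_dist_le_mul fun x y => ?_)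
    rw [Real.coe_toNNReal _ (inv_pos.2 hδ).le, dist_sub_left, Real.dist_eq, ← sub_div, abs_div,
      abs_of_pos hδ, div_eq_inv_mul]
    gcongr
    exact abs_dist_sub_le x y m
  have hzero : ∀ x, δ ≤ dist x m → g x = 0 := fun x hx =>
    projIcc_eq_zero.2 (sub_nonpos.2 ((one_le_div hδ).2 hx))
  have hone : g m = 1 := projIcc_eq_one.2 (by rw [dist_self, zero_div, sub_zero])
  refine ⟨_, g, hg, fun t => ?_, fun x hx => hzero x ?_⟩
  · exact mem_range_of_exists_le_of_exists_ge hg.continuous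
      ⟨m', (hzero m' (min_le_right _ _)).trans_le unitInterval.nonneg'⟩
      ⟨m, unitInterval.le_one'.trans_eq hone.symm⟩
  · exact not_lt.1 fun h => hx (hball (h.trans_le (min_le_left _ _)))

theorem exists_lipschitzWith_cover_unitInterval {ε : NNReal} (hε : 0 < ε) :
    ∃ n, ∃ φ : Fin n → I → I, (∀ i, LipschitzWith ε (φ i)) ∧ ∀ x, ∃ i, x ∈ range (φ i) := by
  obtain ⟨n, hn⟩ := exists_nat_gt ε⁻¹
  have hn0 : 0 < (n : ℝ) := (NNReal.coe_pos.2 (inv_pos.2 hε)).trans hn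
  refine ⟨n + 1, fun i s => projIcc 0 1 zero_le_one ((i + s) / n), fun i => ?_, fun t => ?_⟩
  · rw [← one_mul ε]
    refine (LipschitzWith.projIcc _).comp (LipschitzWith.of_dist_le_mul fun s t => ?_)
    rw [Real.dist_eq, ← sub_div, add_sub_add_left_eq_sub, abs_div, abs_of_pos hn0, div_eq_inv_mul]
    exact mul_le_mul_of_nonneg_right (inv_le_of_inv_le₀ hε hn.le) (abs_nonneg _)
  · have hfloor : ⌊n * (t : ℝ)⌋₊ ≤ n := Nat.floor_le_of_le (mul_le_of_le_one_right hn0.le t.2.2)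
    refine ⟨⟨_, Nat.lt_succ_of_le hfloor⟩, ⟨_, unitInterval.fract_mem (n * t)⟩, ?_⟩
    have ht : (⌊n * (t : ℝ)⌋₊ + Int.fract (n * (t : ℝ))) / n = t := by
      rw [natCast_floor_eq_intCast_floor (mul_nonneg hn0.le t.2.1), Int.floor_add_fract,
        mul_div_cancel_left₀ _ hn0.ne']
    simp only [ht, projIcc_val]

theorem selfRegenFractal_unitInterval : SelfRegenFractal I := by
  refine selfRegenFractal_of_lipschitz (fun _ => exists_lipschitzWith_cover_unitInterval)
    fun U hU hne => ?_
  obtain ⟨K, g, hg, hsurj, hzero⟩ := exists_lipschitzWith_surjective_unitInterval hU hne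
  exact ⟨K, g, hg, hsurj, fun x hx y hy => (hzero x hx).trans (hzero y hy).symm⟩

end UnitInterval

section LocallyConnected

variable {Y Z : Type*} [TopologicalSpace Y] [TopologicalSpace Z]

theorem exists_mem_nhds_isPreconnected_of_isOpenMap [LocallyConnectedSpace Y] {f : Y → Z}
    (hf : Continuous f) (hopen : IsOpenMap f) {y : Y} {U : Set Z} (hU : U ∈ 𝓝 (f y)) :
    ∃ V ∈ 𝓝 (f y), IsPreconnected V ∧ V ⊆ U :=
  ⟨f '' connectedComponentIn (f ⁻¹' U) y,
    hopen.image_mem_nhds (connectedComponentIn_mem_nhds (hf.continuousAt hU)),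
    isPreconnected_connectedComponentIn.image _ hf.continuousOn,
    image_subset_iff.2 (connectedComponentIn_subset _ _)⟩

theorem locallyConnectedSpace_sum [LocallyConnectedSpace Y] [LocallyConnectedSpace Z] :
    LocallyConnectedSpace (Y ⊕ Z) := by
  refine locallyConnectedSpace_iff_connected_subsets.2 ?_
  rintro (y | z) U hU
  · exact exists_mem_nhds_isPreconnected_of_isOpenMap continuous_inl isOpenMap_inl hU
  · exact exists_mem_nhds_isPreconnected_of_isOpenMap continuous_inr isOpenMap_inr hU

end LocallyConnected

/-- The space `Z` with a copy of the pointed space `(X, x₀)` attached by its base point at `a w`,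
for each `w`. It is realised inside `Z × (W → X)`: a point in the copy with index `w` has foot `a w`
and all coordinates except the one at `w` equal to `x₀`. With the product topology the copies shrink
along `cofinite`, so the fringe of compact spaces is compact. -/
def Fringe {W Z X : Type*} (a : W → Z) (x₀ : X) : Type _ :=
  {p : Z × (W → X) // (∀ v w, v ≠ w → p.2 v = x₀ ∨ p.2 w = x₀) ∧ ∀ w, p.2 w = x₀ ∨ p.1 = a w}

namespace Fringe

section Points

variable {W Z X : Type*} {a : W → Z} {x₀ : X}

/-- The retraction of a fringe onto `Z`, collapsing each attached copy to its base point. -/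
def foot (p : Fringe a x₀) : Z := p.1.1

/-- The retraction of a fringe onto the copy of `X` with index `w`. -/
def coord (p : Fringe a x₀) (w : W) : X := p.1.2 w

theorem coord_eq_or_coord_eq (p : Fringe a x₀) {v w : W} (h : v ≠ w) :
    p.coord v = x₀ ∨ p.coord w = x₀ :=
  p.2.1 v w h

theorem coord_eq_or_foot_eq (p : Fringe a x₀) (w : W) : p.coord w = x₀ ∨ p.foot = a w :=
  p.2.2 w

@[ext]
theorem ext {p q : Fringe a x₀} (hfoot : p.foot = q.foot) (hcoord : ∀ w, p.coord w = q.coord w) :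
    p = q :=
  Subtype.ext (Prod.ext hfoot (funext hcoord))

/-- The inclusion of `Z` in a fringe. -/
def base (z : Z) : Fringe a x₀ :=
  ⟨(z, const W x₀), fun _ _ _ => .inl rfl, fun _ => .inl rfl⟩

@[simp]
theorem foot_base (z : Z) : (base z : Fringe a x₀).foot = z := rfl

@[simp]
theorem coord_base (z : Z) (w : W) : (base z : Fringe a x₀).coord w = x₀ := rfl

open Classical in
/-- The inclusion in a fringe of the copy of `X` with index `w`. -/
noncomputable def copy (w : W) (x : X) : Fringe a x₀ :=
  ⟨(a w, update (const W x₀) w x), by grind, by grind⟩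

@[simp]
theorem coord_copy_self (w : W) (x : X) : (copy w x : Fringe a x₀).coord w = x := by
  classical exact update_self w x (const W x₀)

theorem coord_copy_of_ne {v w : W} (h : v ≠ w) (x : X) : (copy w x : Fringe a x₀).coord v = x₀ := by
  classical exact update_of_ne h ..

theorem copy_injective (w : W) : Injective (copy w : X → Fringe a x₀) := fun x y h => by
  simpa using congrArg (coord · w) h

theorem copy_basepoint (w : W) : (copy w x₀ : Fringe a x₀) = base (a w) := by
  classical exact Subtype.ext (Prod.ext rfl (update_eq_self w (const W x₀)))

theorem eq_copy_of_coord_ne {p : Fringe a x₀} {w : W} (h : p.coord w ≠ x₀) :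
    p = copy w (p.coord w) := by
  refine ext ((p.coord_eq_or_foot_eq w).resolve_left h) fun v => ?_
  obtain rfl | hv := eq_or_ne v w
  · rw [coord_copy_self]
  · rw [coord_copy_of_ne hv, (p.coord_eq_or_coord_eq hv).resolve_right h]

theorem eq_of_coord_eq {p q : Fringe a x₀} {w : W} (hp : p.coord w ≠ x₀)
    (h : p.coord w = q.coord w) : p = q := by
  rw [eq_copy_of_coord_ne hp, h, ← eq_copy_of_coord_ne (h.symm.trans_ne hp)]

theorem eq_base_or_eq_copy (p : Fringe a x₀) :
    (∃ z, p = base z) ∨ ∃ w, ∃ x ≠ x₀, p = copy w x := by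
  by_cases h : ∃ w, p.coord w ≠ x₀
  · obtain ⟨w, hw⟩ := h
    exact .inr ⟨w, _, hw, eq_copy_of_coord_ne hw⟩
  · push Not at h
    exact .inl ⟨p.foot, ext rfl h⟩

end Points

section Map

variable {W W' Z Z' X : Type*} {a : W → Z} {b : W' → Z'} {x₀ : X} {f : Z → Z'} {σ : W → W'}

/-- The map of fringes given by `f` on the base and by the identity of `X` from the copy with
index `w` to the copy with index `σ w`. -/
noncomputable def map (f : Z → Z') (hσ : Injective σ) (h : ∀ w, b (σ w) = f (a w))
    (p : Fringe a x₀) : Fringe b x₀ := by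
  refine ⟨(f p.foot, extend σ p.coord (const W' x₀)), fun v w hvw => ?_, fun v => ?_⟩
  · by_cases hv : v ∈ range σ
    · by_cases hw : w ∈ range σ
      · obtain ⟨v, rfl⟩ := hv
        obtain ⟨w, rfl⟩ := hw
        simpa only [hσ.extend_apply] using p.coord_eq_or_coord_eq (ne_of_apply_ne σ hvw)
      · exact .inr (extend_apply' _ _ _ hw)
    · exact .inl (extend_apply' _ _ _ hv)
  · by_cases hv : v ∈ range σ
    · obtain ⟨v, rfl⟩ := hv
      simpa only [hσ.extend_apply, h] using (p.coord_eq_or_foot_eq v).imp_right (congrArg f)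
    · exact .inl (extend_apply' _ _ _ hv)

variable (hσ : Injective σ) (h : ∀ w, b (σ w) = f (a w))

@[simp]
theorem coord_map_apply (p : Fringe a x₀) (w : W) : (map f hσ h p).coord (σ w) = p.coord w :=
  hσ.extend_apply ..

theorem coord_map_of_notMem_range (p : Fringe a x₀) {v : W'} (hv : v ∉ range σ) :
    (map f hσ h p).coord v = x₀ :=
  extend_apply' _ _ _ hv

theorem map_base (z : Z) : map f hσ h (base z : Fringe a x₀) = base (f z) := by
  refine ext rfl fun v => ?_
  by_cases hv : v ∈ range σ
  · obtain ⟨w, rfl⟩ := hv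
    rw [coord_map_apply, coord_base, coord_base]
  · rw [coord_map_of_notMem_range _ _ _ hv, coord_base]

theorem map_copy (w : W) (x : X) : map f hσ h (copy w x : Fringe a x₀) = copy (σ w) x := by
  obtain rfl | hx := eq_or_ne x x₀
  · rw [copy_basepoint, copy_basepoint, map_base, h]
  · have hcoord : (map f hσ h (copy w x : Fringe a x₀)).coord (σ w) = x := by
      rw [coord_map_apply, coord_copy_self]
    rw [eq_copy_of_coord_ne (hcoord.trans_ne hx), hcoord]

end Map

section Uniform

variable {W Z X : Type*} [UniformSpace Z] [UniformSpace X] {a : W → Z} {x₀ : X}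

instance : UniformSpace (Fringe a x₀) :=
  inferInstanceAs (UniformSpace (Subtype (α := Z × (W → X)) _))

theorem isUniformInducing_foot_coord :
    IsUniformInducing fun p : Fringe a x₀ => (p.foot, p.coord) :=
  isUniformInducing_val _

theorem isEmbedding_foot_coord : IsEmbedding fun p : Fringe a x₀ => (p.foot, p.coord) :=
  .subtypeVal

theorem wordContracting_iff {ι Y : Type*} {φ : ι → Y → Y} {g : Y → Fringe a x₀} :
    WordContracting φ g ↔
      WordContracting φ (fun y => (g y).foot) ∧
        ∀ w, WordContracting φ (fun y => (g y).coord w) := by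
  rw [← wordContracting_comp_iff_of_isUniformInducing isUniformInducing_foot_coord, comp_def,
    wordContracting_prodMk_iff, wordContracting_pi_iff]

theorem tendsto_iff {Y : Type*} {l : Filter Y} {g : Y → Fringe a x₀} {p : Fringe a x₀} :
    Tendsto g l (𝓝 p) ↔ Tendsto (fun y => (g y).foot) l (𝓝 p.foot) ∧
      ∀ w, Tendsto (fun y => (g y).coord w) l (𝓝 (p.coord w)) := by
  rw [isEmbedding_foot_coord.tendsto_nhds_iff, Prod.tendsto_iff, tendsto_pi_nhds]
  rfl

theorem continuous_iff {Y : Type*} [TopologicalSpace Y] {g : Y → Fringe a x₀} :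
    Continuous g ↔ Continuous (fun y => (g y).foot) ∧ ∀ w, Continuous fun y => (g y).coord w := by
  simp only [continuous_iff_continuousAt, ContinuousAt, tendsto_iff, forall_and]
  rw [forall_comm (α := Y)]

theorem continuous_foot : Continuous (foot : Fringe a x₀ → Z) :=
  (continuous_iff.1 continuous_id).1

theorem continuous_coord (w : W) : Continuous fun p : Fringe a x₀ => p.coord w :=
  (continuous_iff.1 continuous_id).2 w

theorem continuous_base : Continuous (base : Z → Fringe a x₀) :=
  continuous_iff.2 ⟨continuous_id, fun _ => continuous_const⟩

theorem continuous_copy (w : W) : Continuous (copy w : X → Fringe a x₀) := by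
  refine continuous_iff.2 ⟨continuous_const, fun v => ?_⟩
  obtain rfl | hv := eq_or_ne v w
  · simpa only [coord_copy_self] using continuous_id'
  · simpa only [coord_copy_of_ne hv] using continuous_const

theorem continuous_map {W' Z' : Type*} [UniformSpace Z'] {b : W' → Z'} {f : Z → Z'} {σ : W → W'}
    (hf : Continuous f) (hσ : Injective σ) (h : ∀ w, b (σ w) = f (a w)) :
    Continuous (map f hσ h : Fringe a x₀ → Fringe b x₀) := by
  refine continuous_iff.2 ⟨hf.comp continuous_foot, fun v => ?_⟩
  by_cases hv : v ∈ range σ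
  · obtain ⟨w, rfl⟩ := hv
    simpa only [coord_map_apply] using continuous_coord w
  · simpa only [coord_map_of_notMem_range hσ h _ hv] using continuous_const

instance [ConnectedSpace Z] [ConnectedSpace X] : ConnectedSpace (Fringe a x₀) := by
  have hbase := isPreconnected_range (continuous_base : Continuous (base : Z → Fringe a x₀))
  let z₀ : Z := Classical.arbitrary Z
  refine { isPreconnected_univ := isPreconnected_of_forall (base z₀) fun p _ => ?_
           toNonempty := ⟨base z₀⟩ }
  obtain ⟨z, rfl⟩ | ⟨w, x, -, rfl⟩ := p.eq_base_or_eq_copy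
  · exact ⟨_, subset_univ _, mem_range_self _, mem_range_self z, hbase⟩
  · exact ⟨_, subset_univ _, .inl (mem_range_self _), .inr (mem_range_self x),
      hbase.union (base (a w)) (mem_range_self _) (mem_range.2 ⟨x₀, copy_basepoint w⟩)
        (isPreconnected_range (continuous_copy w))⟩

theorem mapClusterPt_copy {z : Z} (h : MapClusterPt z cofinite a) (x : X) :
    MapClusterPt (base z : Fringe a x₀) cofinite (fun w => copy w x) := by
  obtain ⟨l, hl, hlim⟩ := mapClusterPt_iff_ultrafilter.1 h
  refine mapClusterPt_iff_ultrafilter.2 ⟨l, hl, tendsto_iff.2 ⟨hlim, fun v => ?_⟩⟩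
  refine tendsto_const_nhds.congr' ?_
  filter_upwards [hl (finite_singleton v).compl_mem_cofinite] with w hw
  exact (coord_copy_of_ne (Ne.symm hw) x).symm

theorem exists_copy_mem_of_isOpen [Nontrivial X] (ha : ∀ z, MapClusterPt z cofinite a)
    {O : Set (Fringe a x₀)} (hO : IsOpen O) (hne : O.Nonempty) :
    ∃ w, ∃ x ≠ x₀, copy w x ∈ O := by
  obtain ⟨p, hp⟩ := hne
  obtain ⟨z, rfl⟩ | ⟨w, x, hx, rfl⟩ := p.eq_base_or_eq_copy
  · obtain ⟨x, hx⟩ := exists_ne x₀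
    obtain ⟨w, hw⟩ := ((mapClusterPt_copy (ha z) x).frequently (hO.mem_nhds hp)).exists
    exact ⟨w, x, hx, hw⟩
  · exact ⟨w, x, hx, hp⟩

end Uniform

section Metric

variable {W Z X : Type*} [MetricSpace Z] [MetricSpace X] {a : W → Z} {x₀ : X}

noncomputable instance [Countable W] : MetricSpace (Fringe a x₀) :=
  have : (𝓤 (Fringe a x₀)).IsCountablyGenerated :=
    (isUniformInducing_foot_coord (a := a) (x₀ := x₀)).comap_uniformity ▸
      Filter.comap.isCountablyGenerated _ _
  have : T0Space (Fringe a x₀) := isEmbedding_foot_coord.t0Space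
  UniformSpace.metricSpace _

instance [CompactSpace Z] [CompactSpace X] : CompactSpace (Fringe a x₀) := by
  have hX : ∀ v, IsClosed {p : Z × (W → X) | p.2 v = x₀} := fun v =>
    isClosed_eq (by fun_prop) continuous_const
  have hZ : ∀ v, IsClosed {p : Z × (W → X) | p.1 = a v} := fun v =>
    isClosed_eq continuous_fst continuous_const
  have hclosed : IsClosed {p : Z × (W → X) |
      (∀ v w, v ≠ w → p.2 v = x₀ ∨ p.2 w = x₀) ∧ ∀ w, p.2 w = x₀ ∨ p.1 = a w} := by
    simp only [ofPred_and, ofPred_forall, ofPred_or]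
    exact (isClosed_iInter fun v => isClosed_iInter fun w => isClosed_iInter fun _ =>
      (hX v).union (hX w)).inter (isClosed_iInter fun w => (hX w).union (hZ w))
  exact isCompact_iff_compactSpace.1 hclosed.isCompact

theorem locallyConnectedSpace [Unique W] [CompactSpace Z] [CompactSpace X]
    [LocallyConnectedSpace Z] [LocallyConnectedSpace X] :
    LocallyConnectedSpace (Fringe a x₀) := by
  have : LocallyConnectedSpace (Z ⊕ X) := locallyConnectedSpace_sum
  have hcont : Continuous (Sum.elim base (copy default) : Z ⊕ X → Fringe a x₀) :=
    continuous_base.sumElim (continuous_copy default)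
  refine (hcont.isClosedMap.isQuotientMap hcont fun p => ?_).isCoinducing.locallyConnectedSpace
  obtain ⟨z, rfl⟩ | ⟨w, x, -, rfl⟩ := p.eq_base_or_eq_copy
  · exact ⟨.inl z, rfl⟩
  · exact ⟨.inr x, by rw [Sum.elim_inr, Unique.eq_default w]⟩

theorem exists_selfRegenFractal_of_fiber [Countable W] [Nonempty W] [CompactSpace X] [Nontrivial X]
    (hX : SelfRegenFractal X) :
    ∃ R : Set (Fringe a x₀), IsCompact R ∧ SelfRegenFractal R ∧ (interior R).Nonempty := by
  obtain ⟨w⟩ := ‹Nonempty W›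
  obtain ⟨x, hx⟩ := exists_ne x₀
  refine ⟨range (copy w), isCompact_range (continuous_copy w),
    hX.range_of_injective (continuous_copy w) (copy_injective w), copy w x, ?_⟩
  refine mem_interior.2 ⟨{p | p.coord w ≠ x₀}, fun p hp => ⟨_, (eq_copy_of_coord_ne hp).symm⟩,
    isOpen_ne_fun (continuous_coord w) continuous_const, ?_⟩
  rwa [mem_ofPred_eq, coord_copy_self]

theorem exists_selfRegenFractal_fiber [Countable W] [ConnectedSpace X] [Nontrivial X]
    (ha : ∀ z, MapClusterPt z cofinite a) {R : Set (Fringe a x₀)} (hR : IsCompact R)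
    (hself : SelfRegenFractal R) (hne : (interior R).Nonempty) :
    ∃ S : Set X, IsCompact S ∧ SelfRegenFractal S ∧ (interior S).Nonempty := by
  have : CompactSpace R := isCompact_iff_compactSpace.1 hR
  obtain ⟨w, x, hx, hxR⟩ := exists_copy_mem_of_isOpen ha isOpen_interior hne
  refine hself.exists_of_injective_off_point (r := fun p : R => p.1.coord w) (b := x₀)
    (W := copy w ⁻¹' interior R ∩ {x₀}ᶜ) ((continuous_coord w).comp continuous_subtype_val)
    (fun p q hp hpq => Subtype.ext (eq_of_coord_eq hp hpq))
    ((isOpen_interior.preimage (continuous_copy w)).inter isOpen_compl_singleton)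
    ⟨x, hxR, hx⟩ (fun h => h.2 rfl)
    fun y hy => ⟨⟨copy w y, interior_subset hy.1⟩, coord_copy_self w y⟩

end Metric

section System

variable {ι Z X : Type*}

/-- The self-maps of the fringe of `Z` along the orbit of `d` under `φ`: each `φ i` is extended so
that the copy at `w` moves to the copy at `i :: w`, and one more map, indexed by `none`, folds the
fringe via `q` onto the copy attached at `d`. -/
noncomputable def system (φ : ι → Z → Z) (d : Z) (x₀ : X) (q : Z → X) :
    Option ι → Fringe (fun w => wordMap φ w d) x₀ → Fringe (fun w => wordMap φ w d) x₀
  | none => fun p => copy [] (q p.foot)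
  | some i => map (φ i) List.cons_injective fun w => wordMap_cons_apply φ i w d

variable {φ : ι → Z → Z} {d : Z} {x₀ : X} {q : Z → X}

theorem system_some (i : ι) : system φ d x₀ q (some i) =
    map (φ i) List.cons_injective fun w => wordMap_cons_apply φ i w d :=
  rfl

@[simp]
theorem coord_system_none_nil (p : Fringe (fun w => wordMap φ w d) x₀) :
    (system φ d x₀ q none p).coord [] = q p.foot :=
  coord_copy_self _ _

@[simp]
theorem coord_system_none_cons (p : Fringe (fun w => wordMap φ w d) x₀) (j : ι) (w : List ι) :
    (system φ d x₀ q none p).coord (j :: w) = x₀ :=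
  coord_copy_of_ne (List.cons_ne_nil j w) _

@[simp]
theorem coord_system_some_nil (i : ι) (p : Fringe (fun w => wordMap φ w d) x₀) :
    (system φ d x₀ q (some i) p).coord [] = x₀ := by
  rw [system_some, coord_map_of_notMem_range _ _ _ (by simp)]

@[simp]
theorem coord_system_some_cons_self (i : ι) (p : Fringe (fun w => wordMap φ w d) x₀)
    (w : List ι) : (system φ d x₀ q (some i) p).coord (i :: w) = p.coord w := by
  rw [system_some, coord_map_apply]

theorem coord_system_some_cons_of_ne {i j : ι} (hij : i ≠ j)
    (p : Fringe (fun w => wordMap φ w d) x₀) (w : List ι) :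
    (system φ d x₀ q (some i) p).coord (j :: w) = x₀ := by
  rw [system_some, coord_map_of_notMem_range _ _ _ (by simp [hij])]

theorem exists_mem_range_system (hφ : ∀ z, ∃ i, z ∈ range (φ i)) (hq : Surjective q)
    (p : Fringe (fun w => wordMap φ w d) x₀) : ∃ i, p ∈ range (system φ d x₀ q i) := by
  obtain ⟨z, rfl⟩ | ⟨w, x, -, rfl⟩ := p.eq_base_or_eq_copy
  · obtain ⟨i, y, rfl⟩ := hφ z
    exact ⟨some i, base y, by rw [system_some, map_base]⟩
  · rcases w with _ | ⟨i, w⟩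
    · obtain ⟨z, rfl⟩ := hq x
      exact ⟨none, base z, rfl⟩
    · exact ⟨some i, copy w x, by rw [system_some, map_copy]⟩

theorem wordContracting_foot_system [UniformSpace Z] (hφ : WordContracting φ id) :
    WordContracting (system φ d x₀ q) foot := by
  refine (hφ.option_elim_const d).comp_semiconj (ρ := foot) ?_
  rintro (_ | i) p <;> rfl

theorem wordContracting_coord_system [UniformSpace Z] [UniformSpace X] [Finite ι]
    (hφ : WordContracting φ id) (hq : UniformContinuous q) (w : List ι) :
    WordContracting (system φ d x₀ q) (fun p => p.coord w) := by
  induction w with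
  | nil =>
    refine .of_forall_comp ?_
    rintro (_ | i)
    · simpa only [comp_def, coord_system_none_nil] using
        (wordContracting_foot_system hφ).uniformContinuous_comp hq
    · simpa only [comp_def, coord_system_some_nil] using wordContracting_const _ x₀
  | cons j w ih =>
    refine .of_forall_comp ?_
    rintro (_ | i)
    · simpa only [comp_def, coord_system_none_cons] using wordContracting_const _ x₀
    · obtain rfl | hij := eq_or_ne i j
      · simpa only [comp_def, coord_system_some_cons_self] using ih
      · simpa only [comp_def, coord_system_some_cons_of_ne hij] using wordContracting_const _ x₀

theorem continuous_system [UniformSpace Z] [UniformSpace X] (hφ : ∀ i, Continuous (φ i))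
    (hq : Continuous q) (i : Option ι) : Continuous (system φ d x₀ q i) := by
  rcases i with _ | i
  · exact (continuous_copy []).comp (hq.comp continuous_foot)
  · rw [system_some]
    exact continuous_map (hφ i) _ _

theorem isFractalSystem_system [UniformSpace Z] [UniformSpace X] [Finite ι]
    (hφ : IsFractalSystem φ) (hq : UniformContinuous q) (hsurj : Surjective q) :
    IsFractalSystem (system φ d x₀ q) where
  continuous := continuous_system hφ.continuous hq.continuous
  wordContracting := wordContracting_iff.2
    ⟨wordContracting_foot_system hφ.wordContracting,
      wordContracting_coord_system hφ.wordContracting hq⟩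
  cover := exists_mem_range_system hφ.cover hsurj

end System

end Fringe

/-- If every connected topological fractal contains a self-regenerating fractal with
nonempty interior, and every Peano continuum containing a self-regenerating fractal
with nonempty interior is a topological fractal, then every Peano continuum is a
topological fractal. -/
theorem every_peano_continuum_is_topological_fractal_of_hypotheses
    (h1 : ∀ (X : Type) [MetricSpace X] [CompactSpace X] [ConnectedSpace X],
      IsTopFractal X →
        ∃ R : Set X, IsCompact R ∧ SelfRegenFractal R ∧ (interior R).Nonempty)
    (h2 : ∀ (X : Type) [MetricSpace X] [CompactSpace X] [ConnectedSpace X]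
        [LocallyConnectedSpace X] [Nonempty X],
      (∃ R : Set X, IsCompact R ∧ SelfRegenFractal R ∧ (interior R).Nonempty) →
        IsTopFractal X)
    (X : Type) [MetricSpace X] [CompactSpace X] [ConnectedSpace X]
    [LocallyConnectedSpace X] [Nonempty X] :
    IsTopFractal X := by
  obtain hX | hX := subsingleton_or_nontrivial X
  · exact isTopFractal_of_subsingleton X
  obtain ⟨x₀⟩ := ‹Nonempty X›
  let Z := Fringe (fun _ : Unit => x₀) (0 : unitInterval)
  have : LocallyPathConnectedSpace unitInterval := (convex_Icc 0 1).locallyPathConnectedSpace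
  have : LocallyConnectedSpace Z := Fringe.locallyConnectedSpace
  have d : Z := Fringe.base x₀
  obtain ⟨n, φ, hφ⟩ := (h2 Z (Fringe.exists_selfRegenFractal_of_fiber
    selfRegenFractal_unitInterval)).exists_isFractalSystem
  have hY : IsFractalSystem (Fringe.system φ d x₀ Fringe.foot) :=
    Fringe.isFractalSystem_system hφ
      (CompactSpace.uniformContinuous_of_continuous Fringe.continuous_foot)
      (LeftInverse.surjective Fringe.foot_base)
  obtain ⟨R, hR, hself, hne⟩ := h1 (Fringe (fun w : List (Fin n) => wordMap φ w d) x₀)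
    hY.isTopFractal
  exact h2 X (Fringe.exists_selfRegenFractal_fiber (hφ.mapClusterPt_wordMap d) hR hself hne)
end

section
/- Let S = S^n be the unit n-dimensional sphere in ℝ^{n+1} with the metric inherited from the Euclidean norm, and suppose S = f_1(S) ∪ ... ∪ f_k(S) where each f_i : S → S is a weak contraction. Then k ≥ n + 2. -/
/-! A weak contraction `f` of the unit sphere strictly increases the inner product of distinct
points. Expanding squared norms gives `‖∑ wᵢ xᵢ‖ < ‖∑ wᵢ f(xᵢ)‖` for positive weights and at least
two distinct points, so the convex hull of the image avoids the origin. This hull is compact, hence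
strictly separated from the origin, and the image lies in an open half-space `{φ > 0}`. But
`k ≤ n + 1` linear functionals on `ℝⁿ⁺¹` are simultaneously nonpositive at some point of the sphere:
all but one of them share a nonzero zero `y`, and the last one is nonpositive at `y` or at `-y`.
Such a point lies in no image. -/

open Module Set Metric

/-- A weak contraction: a map strictly decreasing the distance between distinct points, with no
uniform contraction ratio. -/
def IsWeakContraction {X Y : Type*} [PseudoMetricSpace X] [PseudoMetricSpace Y] (f : X → Y) :
    Prop :=
  ∀ x y, x ≠ y → dist (f x) (f y) < dist x y

theorem IsWeakContraction.continuous {X Y : Type*} [PseudoMetricSpace X] [PseudoMetricSpace Y]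
    {f : X → Y} (hf : IsWeakContraction f) : Continuous f := by
  refine (LipschitzWith.of_dist_le' (K := 1) fun x y => ?_).continuous
  rcases eq_or_ne x y with rfl | hxy
  · simp
  · simpa using (hf x y hxy).le

theorem convexHull_eq_iUnion_image_stdSimplex (𝕜 : Type*) {E : Type*} [Field 𝕜] [LinearOrder 𝕜]
    [IsStrictOrderedRing 𝕜] [AddCommGroup E] [Module 𝕜 E] [FiniteDimensional 𝕜 E] (s : Set E) :
    convexHull 𝕜 s = ⋃ m ≤ finrank 𝕜 E + 1,
      (fun p : (Fin m → 𝕜) × (Fin m → E) => ∑ i, p.1 i • p.2 i) ''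
        (stdSimplex 𝕜 (Fin m) ×ˢ univ.pi fun _ => s) := by
  refine Subset.antisymm (fun x hx => ?_) (iUnion₂_subset fun m _ => ?_)
  · obtain ⟨ι, _, z, w, hz, hind, hw, hw1, rfl⟩ := eq_pos_convex_span_of_mem_convexHull hx
    have hcard : Fintype.card ι ≤ finrank 𝕜 E + 1 :=
      hind.card_le_finrank_succ.trans (Nat.succ_le_succ (Submodule.finrank_le _))
    let e := (Fintype.equivFin ι).symm
    exact mem_iUnion₂.2 ⟨Fintype.card ι, hcard, (w ∘ e, z ∘ e),
      ⟨⟨fun i => (hw _).le, (e.sum_comp w).trans hw1⟩, fun i _ => hz (mem_range_self _)⟩,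
      e.sum_comp fun i => w i • z i⟩
  · rintro _ ⟨⟨w, z⟩, ⟨hw, hz⟩, rfl⟩
    exact (convex_convexHull 𝕜 s).sum_mem (fun i _ => hw.1 i) hw.2
      fun i _ => subset_convexHull 𝕜 s (hz i (mem_univ i))

theorem isCompact_convexHull {E : Type*} [AddCommGroup E] [Module ℝ E] [FiniteDimensional ℝ E]
    [TopologicalSpace E] [ContinuousAdd E] [ContinuousSMul ℝ E] {s : Set E} (hs : IsCompact s) :
    IsCompact (convexHull ℝ s) := by
  rw [convexHull_eq_iUnion_image_stdSimplex]
  exact (finite_Iic _).isCompact_biUnion fun m _ =>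
    ((isCompact_stdSimplex ℝ _).prod (isCompact_univ_pi fun _ => hs)).image (by fun_prop)

section InnerProductSpace

variable {E F : Type*} [NormedAddCommGroup E] [InnerProductSpace ℝ E] [NormedAddCommGroup F]
  [InnerProductSpace ℝ F]

theorem dist_lt_dist_iff_inner_lt_inner {u v : E} {x y : F} (hux : ‖u‖ = ‖x‖) (hvy : ‖v‖ = ‖y‖) :
    dist u v < dist x y ↔ inner ℝ x y < inner ℝ u v := by
  rw [dist_eq_norm, dist_eq_norm, ← sq_lt_sq₀ (norm_nonneg _) (norm_nonneg _), norm_sub_sq_real,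
    norm_sub_sq_real, hux, hvy]
  constructor <;> intro h <;> linarith

theorem norm_sum_smul_sq {ι : Type*} (s : Finset ι) (w : ι → ℝ) (v : ι → E) :
    ‖∑ i ∈ s, w i • v i‖ ^ 2 = ∑ i ∈ s, ∑ j ∈ s, w i * w j * inner ℝ (v i) (v j) := by
  simp_rw [← real_inner_self_eq_norm_sq, sum_inner, inner_sum, real_inner_smul_left,
    real_inner_smul_right, mul_assoc]

theorem norm_sum_smul_lt_norm_sum_smul {ι : Type*} [Fintype ι] [Nontrivial ι] {w : ι → ℝ}
    (hw : ∀ i, 0 < w i) {u : ι → E} {x : ι → F} (hnorm : ∀ i, ‖u i‖ = ‖x i‖)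
    (hdist : Pairwise fun i j => dist (u i) (u j) < dist (x i) (x j)) :
    ‖∑ i, w i • x i‖ < ‖∑ i, w i • u i‖ := by
  have hlt : ∀ i j, i ≠ j →
      w i * w j * inner ℝ (x i) (x j) < w i * w j * inner ℝ (u i) (u j) := fun i j hij =>
    mul_lt_mul_of_pos_left ((dist_lt_dist_iff_inner_lt_inner (hnorm i) (hnorm j)).1 (hdist hij))
      (mul_pos (hw i) (hw j))
  have hle : ∀ i j, w i * w j * inner ℝ (x i) (x j) ≤ w i * w j * inner ℝ (u i) (u j) := by
    intro i j
    rcases eq_or_ne i j with rfl | hij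
    · rw [real_inner_self_eq_norm_sq, real_inner_self_eq_norm_sq, hnorm]
    · exact (hlt i j hij).le
  rw [← sq_lt_sq₀ (norm_nonneg _) (norm_nonneg _), norm_sum_smul_sq, norm_sum_smul_sq]
  refine Finset.sum_lt_sum_of_nonempty Finset.univ_nonempty fun i _ => ?_
  obtain ⟨j, hji⟩ := exists_ne i
  exact Finset.sum_lt_sum (fun j _ => hle i j) ⟨j, Finset.mem_univ j, hlt i j hji.symm⟩

theorem IsWeakContraction.zero_notMem_convexHull_range {K : Set F} {f : K → E}
    (hf : IsWeakContraction f) (hK : (0 : F) ∉ K) (hnorm : ∀ x, ‖f x‖ = ‖(x : F)‖) :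
    (0 : E) ∉ convexHull ℝ (range f) := by
  intro hmem
  obtain ⟨ι, _, z, w, hz, hind, hw, hw1, hsum⟩ := eq_pos_convex_span_of_mem_convexHull hmem
  choose x hx using range_subset_iff.1 hz
  obtain rfl : f ∘ x = z := funext hx
  rcases subsingleton_or_nontrivial ι with _ | _
  · have : Nonempty ι := by
      by_contra! hι
      simp at hw1
    obtain ⟨i⟩ := this
    rw [Fintype.sum_subsingleton _ i, smul_eq_zero_iff_right (hw i).ne'] at hsum
    have hxi : (x i : F) = 0 := by
      rw [← norm_eq_zero, ← hnorm, norm_eq_zero]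
      exact hsum
    exact hK (hxi ▸ (x i).2)
  · have hinj : Function.Injective x := hind.injective.of_comp
    have hlt := norm_sum_smul_lt_norm_sum_smul (x := fun i => (x i : F)) hw (fun i => hnorm (x i))
      fun i j hij => hf _ _ (hinj.ne hij)
    exact (norm_nonneg _).not_gt (hlt.trans_eq (norm_eq_zero.2 hsum))

theorem IsWeakContraction.exists_forall_apply_pos [FiniteDimensional ℝ E] {K : Set F} {f : K → E}
    (hf : IsWeakContraction f) (hK : IsCompact K) (hK0 : (0 : F) ∉ K)
    (hnorm : ∀ x, ‖f x‖ = ‖(x : F)‖) : ∃ φ : StrongDual ℝ E, ∀ x, 0 < φ (f x) := by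
  have : CompactSpace K := isCompact_iff_compactSpace.1 hK
  have hclosed : IsClosed (convexHull ℝ (range f)) :=
    (isCompact_convexHull (isCompact_range hf.continuous)).isClosed
  obtain ⟨φ, c, hc, hφ⟩ := geometric_hahn_banach_point_closed (convex_convexHull ℝ _) hclosed
    (hf.zero_notMem_convexHull_range hK0 hnorm)
  rw [map_zero] at hc
  exact ⟨φ, fun x => hc.trans (hφ _ (subset_convexHull ℝ _ (mem_range_self x)))⟩

end InnerProductSpace

section LinearFunctionals

variable {𝕜 V ι : Type*} [Field 𝕜] [AddCommGroup V] [Module 𝕜 V] [FiniteDimensional 𝕜 V]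
  [Fintype ι]

theorem exists_ne_zero_forall_apply_eq_zero (φ : ι → Dual 𝕜 V)
    (hcard : Fintype.card ι < finrank 𝕜 V) : ∃ y ≠ 0, ∀ i, φ i y = 0 := by
  have hker : (LinearMap.pi φ).ker ≠ ⊥ :=
    LinearMap.ker_ne_bot_of_finrank_lt (by rwa [finrank_fintype_fun_eq_card])
  obtain ⟨y, hy, hy0⟩ := Submodule.exists_mem_ne_zero_of_ne_bot hker
  exact ⟨y, hy0, congrFun hy⟩

theorem exists_ne_zero_forall_apply_nonpos [LinearOrder 𝕜] [IsStrictOrderedRing 𝕜] [Nontrivial V]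
    (φ : ι → Dual 𝕜 V) (hcard : Fintype.card ι ≤ finrank 𝕜 V) : ∃ y ≠ 0, ∀ i, φ i y ≤ 0 := by
  classical
  rcases isEmpty_or_nonempty ι with _ | ⟨⟨i₀⟩⟩
  · obtain ⟨y, hy⟩ := exists_ne (0 : V)
    exact ⟨y, hy, isEmptyElim⟩
  have hlt : Fintype.card {i // i ≠ i₀} < Fintype.card ι :=
    Fintype.card_subtype_lt (not_not.2 rfl)
  obtain ⟨y, hy0, hy⟩ := exists_ne_zero_forall_apply_eq_zero
    (fun i : {i // i ≠ i₀} => φ i) (hlt.trans_le hcard)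
  obtain ⟨z, hz0, hz, hzi₀⟩ : ∃ z ≠ 0, (∀ i ≠ i₀, φ i z = 0) ∧ φ i₀ z ≤ 0 := by
    rcases le_total (φ i₀ y) 0 with h | h
    · exact ⟨y, hy0, fun i hi => hy ⟨i, hi⟩, h⟩
    · exact ⟨-y, neg_ne_zero.2 hy0, fun i hi => by simpa using hy ⟨i, hi⟩, by simpa using h⟩
  refine ⟨z, hz0, fun i => ?_⟩
  rcases eq_or_ne i i₀ with rfl | hi
  · exact hzi₀
  · exact (hz i hi).le

end LinearFunctionals

theorem sphere_weak_contraction_cover_card_general {E F ι : Type*} [NormedAddCommGroup E]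
    [InnerProductSpace ℝ E] [FiniteDimensional ℝ E] [Nontrivial E] [NormedAddCommGroup F]
    [InnerProductSpace ℝ F] [Fintype ι] {K : ι → Set F} (hK : ∀ i, IsCompact (K i))
    (hsphere : ∀ i, K i ⊆ sphere 0 1) (f : ∀ i, K i → sphere (0 : E) 1)
    (hweak : ∀ i, IsWeakContraction (f i)) (hcover : (⋃ i, range (f i)) = univ) :
    finrank ℝ E + 1 ≤ Fintype.card ι := by
  by_contra! hcard
  have hpos : ∀ i, ∃ φ : StrongDual ℝ E, ∀ x, 0 < φ (f i x) := fun i =>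
    IsWeakContraction.exists_forall_apply_pos (f := fun x => (f i x : E)) (hweak i) (hK i)
      (fun h0 => by simpa using hsphere i h0) fun x => by
        rw [norm_eq_of_mem_sphere, mem_sphere_zero_iff_norm.1 (hsphere i x.2)]
  choose φ hφ using hpos
  obtain ⟨y, hy0, hy⟩ := exists_ne_zero_forall_apply_nonpos (fun i => (φ i).toLinearMap)
    (Nat.le_of_lt_succ hcard)
  have hmem : ‖y‖⁻¹ • y ∈ sphere (0 : E) 1 := by simp [norm_smul, hy0]
  obtain ⟨i, x, hx⟩ := mem_iUnion.1 (hcover ▸ mem_univ (⟨_, hmem⟩ : sphere (0 : E) 1))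
  have hφy : 0 < ‖y‖⁻¹ * φ i y := by simpa [hx] using hφ i x
  exact hφy.not_ge (mul_nonpos_of_nonneg_of_nonpos (by positivity) (hy i))

/-- If the unit `n`-sphere is covered by the images of `k` weak contractions of itself,
then `k ≥ n + 2`. -/
theorem sphere_weak_contraction_cover_card {n k : ℕ}
    (f : Fin k → (Metric.sphere (0 : EuclideanSpace ℝ (Fin (n + 1))) 1) →
      (Metric.sphere (0 : EuclideanSpace ℝ (Fin (n + 1))) 1))
    (hweak : ∀ i x y, x ≠ y → dist (f i x) (f i y) < dist x y)
    (hcover : (⋃ i, Set.range (f i)) = Set.univ) :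
    n + 2 ≤ k := by
  simpa only [finrank_euclideanSpace_fin, Fintype.card_fin] using
    sphere_weak_contraction_cover_card_general (fun _ => isCompact_sphere _ _)
      (fun _ => Subset.rfl) f hweak hcover
end

section
/- For n ≥ 1, define self-maps f and g of the cube [0,1]^n by f(x_1, ..., x_n) = (x_2/2, x_3, ..., x_n, x_1) and g(x_1, ..., x_n) = (1/2 + x_2/2, x_3, ..., x_n, x_1). Then f and g are continuous, f([0,1]^n) ∪ g([0,1]^n) = [0,1]^n, and the family {f, g} is topologically contractive; hence [0,1]^n is a topological fractal with witnessing number two. -/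
/-- The map `f(x₁, …, xₙ) = (x₂/2, x₃, …, xₙ, x₁)` of the cube `[0,1]ⁿ`
(for `n = 1` it reads `f(x₁) = x₁/2`, thanks to cyclic indexing). -/
noncomputable def cubeF {n : ℕ} [NeZero n] (x : Fin n → Set.Icc (0 : ℝ) 1) :
    Fin n → Set.Icc (0 : ℝ) 1 :=
  fun i =>
    if i.val = 0 then
      ⟨(x (i + 1) : ℝ) / 2,
        ⟨by linarith [(x (i + 1)).2.1], by linarith [(x (i + 1)).2.2]⟩⟩
    else x (i + 1)

/-- The map `g(x₁, …, xₙ) = (1/2 + x₂/2, x₃, …, xₙ, x₁)` of the cube `[0,1]ⁿ`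
(for `n = 1` it reads `g(x₁) = 1/2 + x₁/2`, thanks to cyclic indexing). -/
noncomputable def cubeG {n : ℕ} [NeZero n] (x : Fin n → Set.Icc (0 : ℝ) 1) :
    Fin n → Set.Icc (0 : ℝ) 1 :=
  fun i =>
    if i.val = 0 then
      ⟨1 / 2 + (x (i + 1) : ℝ) / 2,
        ⟨by linarith [(x (i + 1)).2.1], by linarith [(x (i + 1)).2.2]⟩⟩
    else x (i + 1)

open Filter Topology

section Contraction

variable {X : Type*} {D : X → X → ℝ} {q B : ℝ}

theorem foldr_comp_le_pow_length_mul (hq : 0 ≤ q) {l : List (X → X)}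
    (hl : ∀ f ∈ l, ∀ x y, D (f x) (f y) ≤ q * D x y) (x y : X) :
    D (l.foldr (· ∘ ·) id x) (l.foldr (· ∘ ·) id y) ≤ q ^ l.length * D x y := by
  induction l with
  | nil => simp
  | cons f l ih =>
    rw [List.forall_mem_cons] at hl
    calc D (f (l.foldr (· ∘ ·) id x)) (f (l.foldr (· ∘ ·) id y))
        ≤ q * D (l.foldr (· ∘ ·) id x) (l.foldr (· ∘ ·) id y) := hl.1 _ _
      _ ≤ q * (q ^ l.length * D x y) := by gcongr; exact ih hl.2
      _ = q ^ (f :: l).length * D x y := by rw [List.length_cons, pow_succ']; ring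

theorem topContractive_of_forall_le_mul [MetricSpace X] {F : Set (X → X)}
    (hq₀ : 0 ≤ q) (hq₁ : q < 1) (dist_le : ∀ x y, dist x y ≤ D x y) (le_bound : ∀ x y, D x y ≤ B)
    (hF : ∀ f ∈ F, ∀ x y, D (f x) (f y) ≤ q * D x y) : TopContractive F := by
  intro ε hε
  have hlim : Tendsto (fun k ↦ q ^ k * B) atTop (𝓝 0) := by
    simpa only [zero_mul] using (tendsto_pow_atTop_nhds_zero_of_lt_one hq₀ hq₁).mul_const B
  obtain ⟨k, hk⟩ := (hlim.eventually_lt_const (half_pos hε)).exists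
  refine ⟨k, fun l hl hlen ↦ lt_of_le_of_lt ?_ (half_lt_self hε)⟩
  refine Metric.diam_le_of_forall_dist_le (half_pos hε).le ?_
  rintro _ ⟨x, rfl⟩ _ ⟨y, rfl⟩
  calc dist (l.foldr (· ∘ ·) id x) (l.foldr (· ∘ ·) id y)
      ≤ D (l.foldr (· ∘ ·) id x) (l.foldr (· ∘ ·) id y) := dist_le _ _
    _ ≤ q ^ l.length * D x y := foldr_comp_le_pow_length_mul hq₀ (fun f hf ↦ hF f (hl f hf)) x y
    _ ≤ q ^ k * B := by rw [hlen]; gcongr; exact le_bound x y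
    _ ≤ ε / 2 := hk.le

end Contraction

section TwistedShift

variable {X : Type*} {n : ℕ} [NeZero n]

/-- The cyclic shift of the coordinates twisted by `c`, i.e. the self-map
`(x₁, …, xₙ) ↦ (c x₂, x₃, …, xₙ, x₁)` of `Xⁿ`; the place `1` of the formula is the index `0`. -/
def twistedShift (c : X → X) (x : Fin n → X) : Fin n → X :=
  Function.update (fun i ↦ x (i + 1)) 0 (c (x 1))

theorem twistedShift_apply_zero (c : X → X) (x : Fin n → X) : twistedShift c x 0 = c (x 1) :=
  Function.update_self ..

theorem twistedShift_apply_of_ne_zero (c : X → X) (x : Fin n → X) {i : Fin n} (hi : i ≠ 0) :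
    twistedShift c x i = x (i + 1) :=
  Function.update_of_ne hi ..

theorem continuous_twistedShift [TopologicalSpace X] {c : X → X} (hc : Continuous c) :
    Continuous (twistedShift (n := n) c) :=
  Continuous.update (by fun_prop) 0 (by fun_prop)

theorem mem_range_twistedShift {c : X → X} {y : Fin n → X} :
    y ∈ Set.range (twistedShift c) ↔ y 0 ∈ Set.range c := by
  constructor
  · rintro ⟨x, rfl⟩
    exact ⟨x 1, (twistedShift_apply_zero c x).symm⟩
  · rintro ⟨t, ht⟩
    exact ⟨fun i ↦ Function.update y 0 t (i - 1), by simp [twistedShift, ht]⟩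

theorem range_twistedShift_union_range_twistedShift {c d : X → X}
    (h : Set.range c ∪ Set.range d = Set.univ) :
    Set.range (twistedShift (n := n) c) ∪ Set.range (twistedShift (n := n) d) = Set.univ := by
  refine Set.eq_univ_of_forall fun y ↦ ?_
  rw [Set.mem_union, mem_range_twistedShift, mem_range_twistedShift, ← Set.mem_union, h]
  exact Set.mem_univ _

section ShiftDist

variable [PseudoMetricSpace X] {r : ℝ} {K : NNReal}

/-- The sup distance on `Xⁿ` with weights `1, r, …, rⁿ⁻¹` on the coordinates `x₂, x₃, …, xₙ, x₁`,
for which twisted shifts by sufficiently contracting maps are contractions. The weight exponent of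
the coordinate with index `i` is the cyclic difference `i - 1` in `Fin n`. -/
noncomputable def shiftDist (r : ℝ) (x y : Fin n → X) : ℝ :=
  ‖fun i ↦ r ^ (i - 1).val * dist (x i) (y i)‖

theorem shiftDist_le_iff (hr : 0 ≤ r) {x y : Fin n → X} {a : ℝ} (ha : 0 ≤ a) :
    shiftDist r x y ≤ a ↔ ∀ i, r ^ (i - 1).val * dist (x i) (y i) ≤ a := by
  rw [shiftDist, pi_norm_le_iff_of_nonneg ha]
  refine forall_congr' fun i ↦ ?_
  rw [Real.norm_of_nonneg (by positivity)]

theorem shiftDist_nonneg (x y : Fin n → X) : 0 ≤ shiftDist r x y :=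
  norm_nonneg _

theorem pow_mul_dist_le_shiftDist (hr : 0 ≤ r) (x y : Fin n → X) (i : Fin n) :
    r ^ (i - 1).val * dist (x i) (y i) ≤ shiftDist r x y :=
  (shiftDist_le_iff hr (shiftDist_nonneg x y)).1 le_rfl i

theorem dist_le_shiftDist (hr : 1 ≤ r) (x y : Fin n → X) : dist x y ≤ shiftDist r x y :=
  (dist_pi_le_iff (shiftDist_nonneg x y)).2 fun i ↦
    (le_mul_of_one_le_left dist_nonneg (one_le_pow₀ hr)).trans
      (pow_mul_dist_le_shiftDist (zero_le_one.trans hr) x y i)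

theorem shiftDist_le_pow_mul_dist (hr : 1 ≤ r) (x y : Fin n → X) :
    shiftDist r x y ≤ r ^ n * dist x y := by
  refine (shiftDist_le_iff (by positivity) (by positivity)).2 fun i ↦ ?_
  gcongr
  exacts [(i - 1).isLt.le, dist_le_pi_dist x y i]

theorem shiftDist_twistedShift_le (hr : 1 ≤ r) (hK : K * r ^ n ≤ 1) {c : X → X}
    (hc : LipschitzWith K c) (x y : Fin n → X) :
    shiftDist r (twistedShift c x) (twistedShift c y) ≤ r⁻¹ * shiftDist r x y := by
  have hr₀ : 0 < r := zero_lt_one.trans_le hr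
  refine (shiftDist_le_iff hr₀.le (mul_nonneg (by positivity) (shiftDist_nonneg x y))).2 fun i ↦ ?_
  rw [le_inv_mul_iff₀ hr₀, ← mul_assoc, ← pow_succ']
  by_cases hi : i = 0
  · subst hi
    rw [twistedShift_apply_zero, twistedShift_apply_zero]
    calc r ^ ((0 - 1 : Fin n).val + 1) * dist (c (x 1)) (c (y 1))
        ≤ r ^ n * (K * dist (x 1) (y 1)) := by
          gcongr
          exacts [(0 - 1 : Fin n).isLt, hc.dist_le_mul _ _]
      _ = K * r ^ n * dist (x 1) (y 1) := by ring
      _ ≤ dist (x 1) (y 1) := mul_le_of_le_one_left dist_nonneg hK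
      _ ≤ dist x y := dist_le_pi_dist x y 1
      _ ≤ shiftDist r x y := dist_le_shiftDist hr x y
  · have hval : (i - 1).val + 1 = (i + 1 - 1).val := by
      rw [add_sub_cancel_right, Fin.val_sub_one_of_ne_zero hi,
        Nat.sub_add_cancel (Nat.one_le_iff_ne_zero.2 (Fin.val_ne_zero_iff.2 hi))]
    rw [twistedShift_apply_of_ne_zero c x hi, twistedShift_apply_of_ne_zero c y hi, hval]
    exact pow_mul_dist_le_shiftDist hr₀.le x y (i + 1)

end ShiftDist

theorem exists_one_lt_mul_pow_le_one {a : ℝ} (ha : a < 1) (m : ℕ) : ∃ r > 1, a * r ^ m ≤ 1 := by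
  have hlim : Tendsto (fun r : ℝ ↦ a * r ^ m) (𝓝[>] 1) (𝓝 a) :=
    tendsto_nhdsWithin_of_tendsto_nhds (Continuous.tendsto' (by fun_prop) 1 a (by simp))
  obtain ⟨r, hr, hr₁⟩ := ((hlim.eventually_lt_const ha).and self_mem_nhdsWithin).exists
  exact ⟨r, hr₁, hr.le⟩

theorem topContractive_image_twistedShift [MetricSpace X] [BoundedSpace X] {K : NNReal}
    (hK : K < 1) {S : Set (X → X)} (hS : ∀ c ∈ S, LipschitzWith K c) :
    TopContractive (twistedShift (n := n) '' S) := by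
  obtain ⟨r, hr, hKr⟩ := exists_one_lt_mul_pow_le_one (NNReal.coe_lt_one.2 hK) n
  refine topContractive_of_forall_le_mul (B := r ^ n * Metric.diam (Set.univ : Set (Fin n → X)))
    (by positivity) (inv_lt_one_of_one_lt₀ hr) (dist_le_shiftDist hr.le) (fun x y ↦ ?_) ?_
  · refine (shiftDist_le_pow_mul_dist hr.le x y).trans ?_
    gcongr
    exact Metric.dist_le_diam_of_mem (.all _) (Set.mem_univ x) (Set.mem_univ y)
  · rintro _ ⟨c, hc, rfl⟩
    exact shiftDist_twistedShift_le hr.le hKr (hS c hc)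

end TwistedShift

section UnitInterval

open unitInterval

/-- The contraction of `[0,1]` by the factor `1/2` towards its point `a`; the maps `t ↦ t/2` and
`t ↦ 1/2 + t/2` are the cases `a = 0` and `a = 1`. -/
noncomputable def halfway (a t : I) : I :=
  ⟨((a : ℝ) + t) / 2, by linarith [a.2.1, t.2.1], by linarith [a.2.2, t.2.2]⟩

theorem coe_halfway (a t : I) : (halfway a t : ℝ) = (a + t) / 2 :=
  rfl

theorem lipschitzWith_halfway (a : I) : LipschitzWith (1 / 2) (halfway a) := by
  refine LipschitzWith.of_dist_le_mul fun s t ↦ le_of_eq ?_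
  rw [Subtype.dist_eq, Subtype.dist_eq, coe_halfway, coe_halfway, Real.dist_eq, Real.dist_eq,
    ← sub_div, add_sub_add_left_eq_sub, abs_div, abs_two]
  push_cast
  ring

theorem range_halfway_zero_union_range_halfway_one :
    Set.range (halfway 0) ∪ Set.range (halfway 1) = Set.univ := by
  refine Set.eq_univ_of_forall fun t ↦ ?_
  rcases le_total (t : ℝ) (1 / 2) with ht | ht
  · refine Or.inl ⟨⟨2 * t, by linarith [t.2.1], by linarith⟩, Subtype.ext ?_⟩
    rw [coe_halfway, Set.Icc.coe_zero]
    ring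
  · refine Or.inr ⟨⟨2 * t - 1, by linarith, by linarith [t.2.2]⟩, Subtype.ext ?_⟩
    rw [coe_halfway, Set.Icc.coe_one]
    ring

variable {n : ℕ} [NeZero n]

theorem cubeF_eq_twistedShift : cubeF (n := n) = twistedShift (halfway 0) := by
  ext x i
  by_cases hi : i = 0
  · subst hi
    simp [cubeF, twistedShift_apply_zero, coe_halfway]
  · simp [cubeF, twistedShift_apply_of_ne_zero _ _ hi, hi]

theorem cubeG_eq_twistedShift : cubeG (n := n) = twistedShift (halfway 1) := by
  ext x i
  by_cases hi : i = 0
  · subst hi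
    simp [cubeG, twistedShift_apply_zero, coe_halfway, add_div]
  · simp [cubeG, twistedShift_apply_of_ne_zero _ _ hi, hi]

end UnitInterval

/-- The maps `f` and `g` above are continuous, their images cover `[0,1]ⁿ` and
`{f, g}` is topologically contractive; hence `[0,1]ⁿ` is a topological fractal with
witnessing number two. -/
theorem cube_is_topological_fractal_with_two_maps {n : ℕ} [NeZero n] :
    Continuous (cubeF (n := n)) ∧ Continuous (cubeG (n := n)) ∧
    Set.range (cubeF (n := n)) ∪ Set.range (cubeG (n := n)) = Set.univ ∧
    TopContractive {cubeF (n := n), cubeG (n := n)} := by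
  rw [cubeF_eq_twistedShift, cubeG_eq_twistedShift]
  refine ⟨continuous_twistedShift (lipschitzWith_halfway 0).continuous,
    continuous_twistedShift (lipschitzWith_halfway 1).continuous,
    range_twistedShift_union_range_twistedShift range_halfway_zero_union_range_halfway_one, ?_⟩
  rw [← Set.image_pair]
  refine topContractive_image_twistedShift (NNReal.half_lt_self one_ne_zero) ?_
  rintro _ (rfl | rfl)
  exacts [lipschitzWith_halfway 0, lipschitzWith_halfway 1]
end

section
/- Every planar absolute retract is a topological fractal: if X ⊆ ℝ² is a nonempty compact set that is an absolute retract (equivalently, a retract of the Hilbert cube), then X is a topological fractal. -/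
/-! A compact retract of the plane is a Peano continuum `X`. To make it a fractal it is enough to
find a map `ρ` of `X` onto a space `K` which small Lipschitz self-maps `s` of `K` cover, and
finitely many maps `γ : K → X` which cover `X` and for which `ρ ∘ γ` is Lipschitz: the maps
`γ ∘ s ∘ ρ` then form a contractive family, because all but the outermost `γ` enter their
compositions through `ρ ∘ γ`.

If `X` has interior points, `K` is a ball inside `X`, onto which the plane retracts.

If `X` has empty interior, then by Sard's theorem every continuous map from `X` to the plane can
be perturbed to avoid the origin. So a nonvanishing function on a closed subset of `X` is close
to a nonvanishing function on `X`, which has a continuous logarithm because the plane retracts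
onto `X`; then the original function has one too. This makes `X` hereditarily unicoherent, so two
distinct points are joined by a unique arc, and `X` projects onto it by collapsing each branch
that leaves the arc. With `ρ` this projection, a path `γ` that runs through every branch is
obtained by traversing the arc slowly enough to leave time for a loop over each branch, during
which `ρ ∘ γ` is constant. -/

open Set Metric Filter Topology Function
open scoped NNReal unitInterval

/-- The conclusion of the theorem as a property of metric spaces: being covered by the images of
a finite topologically contractive family of continuous self-maps. Compactness is left out. -/
def IsTopologicalFractal (X : Type*) [MetricSpace X] : Prop :=
  ∃ F : Set (X → X), F.Finite ∧ (∀ f ∈ F, Continuous f) ∧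
    TopContractive F ∧ (⋃ f ∈ F, range f) = univ

/-- A space with fine contractions is covered, for every `ε > 0`, by the images of finitely many
`ε`-Lipschitz self-maps. It serves as the model through which the maps of a fractal factor. -/
def HasFineContractions (K : Type*) [MetricSpace K] : Prop :=
  ∀ ε : ℝ≥0, 0 < ε → ∃ S : Set (K → K), S.Finite ∧ (∀ s ∈ S, LipschitzWith ε s) ∧
    ∀ x, ∃ s ∈ S, x ∈ range s

theorem HasFineContractions.of_lipschitzWith_retraction {E : Type*} [NormedAddCommGroup E]
    [NormedSpace ℝ E] {K : Set E} (hK : IsCompact K) (hint : (interior K).Nonempty) {π : E → E}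
    {L : ℝ≥0} (hπ : LipschitzWith L π) (hmem : ∀ x, π x ∈ K) (hfix : ∀ x ∈ K, π x = x) :
    HasFineContractions K := by
  intro ε hε
  obtain ⟨p, hp⟩ := hint
  obtain ⟨δ, hδ, hball⟩ := Metric.mem_nhds_iff.1 (mem_interior_iff_mem_nhds.1 hp)
  set η : ℝ≥0 := ε / (L + 1)
  have hη : 0 < η := by positivity
  have hLη : L * (η * 1) ≤ ε := by
    rw [mul_one, mul_div_left_comm]
    exact mul_le_of_le_one_right' (div_le_one_of_le₀ le_self_add (zero_le))
  obtain ⟨C, -, hC, hcover⟩ := hK.finite_cover_balls (mul_pos (NNReal.coe_pos.2 hη) hδ)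
  let s : E → K → K := fun c x => ⟨π (c + (η : ℝ) • (x - p)), hmem _⟩
  refine ⟨s '' C, hC.image s, ?_, fun y => ?_⟩
  · rintro _ ⟨c, -, rfl⟩
    have hscale : LipschitzWith (η * 1) fun x : K => c + (η : ℝ) • ((x : E) - p) :=
      LipschitzWith.of_dist_le_mul fun x y => by
        rw [dist_add_left, dist_smul₀, dist_sub_right, Subtype.dist_eq, mul_one,
          NNReal.norm_eq]
    exact ((hπ.comp hscale).weaken hLη).subtype_mk _
  · obtain ⟨c, hc, hyc⟩ := mem_iUnion₂.1 (hcover y.2)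
    have hx : p + (η : ℝ)⁻¹ • ((y : E) - c) ∈ K := hball <| by
      rw [mem_ball, dist_self_add_left, norm_smul, norm_inv, NNReal.norm_eq,
        ← dist_eq_norm]
      exact (inv_mul_lt_iff₀ (NNReal.coe_pos.2 hη)).2 hyc
    refine ⟨s c, ⟨c, hc, rfl⟩, ⟨_, hx⟩, Subtype.ext ?_⟩
    simp only [s]
    rw [add_sub_cancel_left, smul_inv_smul₀ (NNReal.coe_pos.2 hη).ne', add_sub_cancel,
      hfix y y.2]

theorem hasFineContractions_unitInterval : HasFineContractions I :=
  .of_lipschitzWith_retraction (π := fun x => projIcc (0 : ℝ) 1 zero_le_one x) isCompact_Icc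
    (by simp) ((LipschitzWith.subtype_val _).comp (LipschitzWith.projIcc zero_le_one))
    (fun x => (projIcc 0 1 zero_le_one x).2) fun x hx => by rw [projIcc_of_mem zero_le_one hx]

section Factorization

variable {X K : Type*} {ρ : X → K}

theorem exists_lipschitzWith_semiconj_foldr [PseudoEMetricSpace K] {c : ℝ≥0} (l : List (X → X))
    (hl : ∀ f ∈ l, ∃ g : K → K, LipschitzWith c g ∧ Semiconj ρ f g) :
    ∃ g : K → K, LipschitzWith (c ^ l.length) g ∧ Semiconj ρ (l.foldr (· ∘ ·) id) g := by
  induction l with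
  | nil => exact ⟨id, by simpa using LipschitzWith.id, .id_right⟩
  | cons f l ih =>
    obtain ⟨hf, hl⟩ := List.forall_mem_cons.1 hl
    obtain ⟨g, hg, hfg⟩ := hf
    obtain ⟨G, hG, hlG⟩ := ih hl
    refine ⟨g ∘ G, ?_, hfg.comp_right hlG⟩
    rw [List.length_cons, pow_succ']
    exact hg.comp hG

theorem topContractive_image_comp [MetricSpace X] [MetricSpace K] [CompactSpace K]
    {H : Set (K → X)} (hH : H.Finite) (hcont : ∀ h ∈ H, Continuous h) {c : ℝ≥0} (hc : c < 1)
    (hlip : ∀ h ∈ H, LipschitzWith c (ρ ∘ h)) : TopContractive ((· ∘ ρ) '' H) := by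
  intro ε hε
  obtain ⟨δ, hδ, hHδ⟩ : ∃ δ > 0, ∀ h ∈ H, ∀ a b, dist a b < δ → dist (h a) (h b) < ε / 2 := by
    have hsmall : ∀ h ∈ H, ∀ᶠ δ in 𝓝[>] (0 : ℝ),
        ∀ a b, dist a b < δ → dist (h a) (h b) < ε / 2 := fun h hh => by
      obtain ⟨δ, hδ, hclose⟩ := Metric.uniformContinuous_iff.1
        (CompactSpace.uniformContinuous_of_continuous (hcont h hh)) (ε / 2) (half_pos hε)
      filter_upwards [Ioo_mem_nhdsGT hδ] with δ' hδ' a b hab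
      exact hclose (hab.trans hδ'.2)
    obtain ⟨δ, hclose, hδ⟩ :=
      (((eventually_all_finite hH).2 hsmall).and self_mem_nhdsWithin).exists
    exact ⟨δ, hδ, hclose⟩
  obtain ⟨k, hk⟩ : ∃ k : ℕ, (c : ℝ) ^ k * diam (univ : Set K) < δ := by
    have hlim := (tendsto_pow_atTop_nhds_zero_of_lt_one c.2 (NNReal.coe_lt_one.2 hc)).mul_const
      (diam (univ : Set K))
    rw [zero_mul] at hlim
    exact (hlim.eventually (gt_mem_nhds hδ)).exists
  refine ⟨k + 1, fun l hl hlen => ?_⟩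
  obtain ⟨f, l, rfl⟩ := List.exists_cons_of_length_eq_add_one hlen
  obtain ⟨⟨h, hh, rfl⟩, htail⟩ := List.forall_mem_cons.1 hl
  obtain ⟨g, hg, hlg⟩ := exists_lipschitzWith_semiconj_foldr (c := c) (ρ := ρ) l fun f hf => by
    obtain ⟨h, hh, rfl⟩ := htail f hf
    exact ⟨ρ ∘ h, hlip h hh, fun _ => rfl⟩
  rw [Nat.succ_injective hlen] at hg
  refine (diam_le_of_forall_dist_le (C := ε / 2) (half_pos hε).le ?_).trans_lt (half_lt_self hε)
  rintro _ ⟨x, rfl⟩ _ ⟨y, rfl⟩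
  refine (hHδ h hh _ _ ?_).le
  rw [hlg x, hlg y]
  calc dist (g (ρ x)) (g (ρ y)) ≤ c ^ k * dist (ρ x) (ρ y) := by
        simpa using hg.dist_le_mul (ρ x) (ρ y)
    _ ≤ c ^ k * diam (univ : Set K) := by
        gcongr
        exact dist_le_diam_of_mem isCompact_univ.isBounded (mem_univ _) (mem_univ _)
    _ < δ := hk

theorem IsTopologicalFractal.of_lipschitzWith_comp [MetricSpace X] [MetricSpace K]
    [CompactSpace K] (hK : HasFineContractions K) (hρ : Continuous ρ) (hρs : Surjective ρ)
    {Γ : Set (K → X)} (hΓ : Γ.Finite) (hΓc : ∀ γ ∈ Γ, Continuous γ)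
    (hcover : ∀ x, ∃ γ ∈ Γ, x ∈ range γ) (hlip : ∀ γ ∈ Γ, ∃ L, LipschitzWith L (ρ ∘ γ)) :
    IsTopologicalFractal X := by
  obtain ⟨L, hL⟩ : ∃ L, ∀ γ ∈ Γ, LipschitzWith L (ρ ∘ γ) := by
    choose! L hL using hlip
    obtain ⟨M, hM⟩ := (hΓ.image L).bddAbove
    exact ⟨M, fun γ hγ => (hL γ hγ).weaken (hM (mem_image_of_mem L hγ))⟩
  obtain ⟨ε, hε, hLε⟩ : ∃ ε > 0, L * ε < 1 :=
    ⟨(L + 1)⁻¹, by positivity, (mul_inv_lt_iff₀ (by positivity)).2 (by simp)⟩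
  obtain ⟨S, hS, hSL, hScover⟩ := hK ε hε
  have hcont : ∀ h ∈ image2 (· ∘ ·) Γ S, Continuous h := by
    rintro _ ⟨γ, hγ, s, hs, rfl⟩
    exact (hΓc γ hγ).comp (hSL s hs).continuous
  have hfin : (image2 (· ∘ ·) Γ S).Finite := hΓ.image2 _ hS
  refine ⟨(· ∘ ρ) '' image2 (· ∘ ·) Γ S, hfin.image _,
    forall_mem_image.2 fun h hh => (hcont h hh).comp hρ,
    topContractive_image_comp hfin hcont hLε ?_, eq_univ_of_forall fun x => ?_⟩
  · rintro _ ⟨γ, hγ, s, hs, rfl⟩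
    exact (hL γ hγ).comp (hSL s hs)
  · obtain ⟨γ, hγ, a, rfl⟩ := hcover x
    obtain ⟨s, hs, b, rfl⟩ := hScover a
    obtain ⟨z, rfl⟩ := hρs b
    exact mem_biUnion ⟨_, ⟨γ, hγ, s, hs, rfl⟩, rfl⟩ ⟨z, rfl⟩

end Factorization

section SurjectivePaths

theorem exists_retraction_of_homeomorph_range.{u} {E : Type u} [TopologicalSpace E]
    [NormalSpace E] {X : Set E} (hX : IsClosed X)
    (hAR : ∃ r : (ℕ → Icc (0 : ℝ) 1) → (ℕ → Icc (0 : ℝ) 1),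
      Continuous r ∧ r ∘ r = r ∧ Nonempty (X ≃ₜ range r)) :
    ∃ R : C(E, X), ∀ x : X, R x = x := by
  obtain ⟨r, hr, hrr, ⟨e⟩⟩ := hAR
  have : TietzeExtension.{u} (range r) := by
    refine .of_retract ⟨Subtype.val, continuous_subtype_val⟩
      ⟨rangeFactorization r, hr.subtype_mk _⟩ ?_
    ext1 ⟨_, y, rfl⟩
    exact Subtype.ext (congrFun hrr y)
  have : TietzeExtension.{u} X := .of_homeo e
  obtain ⟨R, hR⟩ := (ContinuousMap.id X).exists_restrict_eq hX
  exact ⟨R, DFunLike.congr_fun hR⟩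

theorem exists_surjective_path_of_retraction {E : Type*} [NormedAddCommGroup E] [NormedSpace ℝ E]
    [FiniteDimensional ℝ E] {X : Set E} (hX : IsCompact X) (R : C(E, X)) (hR : ∀ x : X, R x = x) :
    ∃ h : C(I, X), Surjective h := by
  have := isCompact_iff_compactSpace.1 hX
  have : Nonempty X := ⟨R 0⟩
  obtain ⟨c, hc, hcs⟩ := exists_nat_bool_continuous_surjective_of_compact X
  have := TietzeExtension.of_tvs ℝ (E := E)
  obtain ⟨g, hg⟩ := ContinuousMap.exists_restrict_eq isClosed_cantorSet
    (⟨fun t => c (cantorSetHomeomorphNatToBool t), by fun_prop⟩ : C(cantorSet, E))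
  refine ⟨⟨fun t => R (g t), by fun_prop⟩, fun x => ?_⟩
  obtain ⟨t, rfl⟩ := (hcs.comp cantorSetHomeomorphNatToBool.surjective) x
  exact ⟨⟨t, cantorSet_subset_unitInterval t.2⟩,
    (congrArg R (DFunLike.congr_fun hg t)).trans (hR _)⟩

theorem exists_surjective_loop {X : Type*} [TopologicalSpace X] [PathConnectedSpace X]
    (h : C(I, X)) (hs : Surjective h) (p : X) : ∃ q : Path p p, Surjective q := by
  let h' : Path (h 0) (h 1) := ⟨h, rfl, rfl⟩
  refine ⟨((PathConnectedSpace.somePath p (h 0)).trans h').trans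
    (PathConnectedSpace.somePath (h 1) p), range_eq_univ.1 (univ_subset_iff.1 ?_)⟩
  rw [Path.trans_range, Path.trans_range]
  exact hs.range_eq.ge.trans (subset_union_right.trans subset_union_left)

end SurjectivePaths

section Cutoff

variable {α : Type*} [PseudoMetricSpace α] {p : α} {r : ℝ}

/-- A cutoff around `p`: it is `1` on `closedBall p r` and `0` off `ball p (2 * r)`. -/
noncomputable def ballCutoff (p : α) (r : ℝ) (x : α) : ℝ :=
  max 0 (min 1 (2 - dist x p / r))

theorem ballCutoff_mem_Icc (x : α) : ballCutoff p r x ∈ Icc (0 : ℝ) 1 :=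
  ⟨le_max_left _ _, max_le zero_le_one (min_le_left _ _)⟩

theorem ballCutoff_of_dist_le (hr : 0 < r) {x : α} (hx : dist x p ≤ r) : ballCutoff p r x = 1 := by
  have := (div_le_one hr).2 hx
  rw [ballCutoff, min_eq_left (by linarith), max_eq_right zero_le_one]

theorem ballCutoff_of_le_dist (hr : 0 < r) {x : α} (hx : 2 * r ≤ dist x p) :
    ballCutoff p r x = 0 := by
  have := (le_div_iff₀ hr).2 hx
  exact max_eq_left ((min_le_right _ _).trans (by linarith))

theorem lipschitzWith_ballCutoff : LipschitzWith ‖r⁻¹‖₊ (ballCutoff p r) := by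
  have hdiv : LipschitzWith ‖r⁻¹‖₊ fun x : α => dist x p / r := by
    simpa only [div_eq_inv_mul, mul_one] using!
      (lipschitzWith_smul r⁻¹).comp (LipschitzWith.dist_left p)
  simpa only [zero_add] using! (((LipschitzWith.const 2).sub hdiv).const_min 1).const_max 0

end Cutoff

section Interior

variable {E : Type*} [NormedAddCommGroup E] [NormedSpace ℝ E] {p : E} {r : ℝ}

/-- The retraction of a normed space onto `closedBall p r` which collapses the complement of
`ball p (2 * r)` to `p`. Unlike the radial retraction it is constant far from `p`. -/
noncomputable def ballFold (p : E) (r : ℝ) (x : E) : E :=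
  AffineMap.lineMap p x (ballCutoff p r x)

theorem ballFold_of_dist_le (hr : 0 < r) {x : E} (hx : dist x p ≤ r) : ballFold p r x = x := by
  rw [ballFold, ballCutoff_of_dist_le hr hx, AffineMap.lineMap_apply_one]

theorem ballFold_of_le_dist (hr : 0 < r) {x : E} (hx : 2 * r ≤ dist x p) :
    ballFold p r x = p := by
  rw [ballFold, ballCutoff_of_le_dist hr hx, AffineMap.lineMap_apply_zero]

theorem ballFold_mem_closedBall (hr : 0 < r) (x : E) : ballFold p r x ∈ closedBall p r := by
  rcases le_total (2 * r) (dist x p) with hx | hx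
  · rw [ballFold_of_le_dist hr hx]
    exact mem_closedBall_self hr.le
  obtain ⟨t, ht⟩ : ∃ t, dist x p = t * r := ⟨_, (div_mul_cancel₀ _ hr.ne').symm⟩
  have ht2 : t ≤ 2 := le_of_mul_le_mul_right (ht ▸ hx) hr
  have ht0 : 0 ≤ t := nonneg_of_mul_nonneg_left (ht ▸ dist_nonneg) hr
  have hcut : ballCutoff p r x ≤ 2 - t := by
    rw [ballCutoff, ht, mul_div_cancel_right₀ _ hr.ne']
    exact max_le (by linarith) (min_le_right _ _)
  rw [mem_closedBall, ballFold, dist_lineMap_left, Real.norm_of_nonneg (ballCutoff_mem_Icc x).1,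
    dist_comm, ht, ← mul_assoc]
  refine mul_le_of_le_one_left hr.le ?_
  nlinarith [sq_nonneg (t - 1)]

theorem lipschitzWith_ballFold (hr : 0 < r) : LipschitzWith 3 (ballFold p r) := by
  have key : ∀ x y : E, dist y p ≤ 2 * r → dist (ballFold p r x) (ballFold p r y) ≤ 3 * dist x y :=
    fun x y hy => calc
      dist (ballFold p r x) (ballFold p r y)
        ≤ dist (AffineMap.lineMap p x (ballCutoff p r x))
            (AffineMap.lineMap p y (ballCutoff p r x)) +
          dist (AffineMap.lineMap p y (ballCutoff p r x)) (ballFold p r y) := dist_triangle _ _ _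
      _ = |ballCutoff p r x| * dist x y + |ballCutoff p r x - ballCutoff p r y| * dist y p := by
        rw [ballFold, dist_lineMap_lineMap, Real.dist_eq, dist_comm p y,
          AffineMap.lineMap_apply_module', AffineMap.lineMap_apply_module', dist_add_right,
          dist_smul₀, dist_sub_right, Real.norm_eq_abs]
      _ ≤ 1 * dist x y + ‖r⁻¹‖₊ * dist x y * (2 * r) := by
        gcongr
        · exact (abs_of_nonneg (ballCutoff_mem_Icc x).1).trans_le (ballCutoff_mem_Icc x).2
        · exact lipschitzWith_ballCutoff.dist_le_mul x y
      _ = 3 * dist x y := by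
        rw [coe_nnnorm, Real.norm_of_nonneg (inv_nonneg.2 hr.le)]
        field_simp
        ring
  refine LipschitzWith.of_dist_le_mul fun x y => ?_
  rcases le_total (dist y p) (2 * r) with hy | hy
  · exact key x y hy
  rcases le_total (dist x p) (2 * r) with hx | hx
  · rw [dist_comm, dist_comm x]
    exact key y x hx
  · rw [ballFold_of_le_dist hr hx, ballFold_of_le_dist hr hy, dist_self]
    positivity

theorem exists_lipschitzWith_dist_lt (h : C(I, E)) {ε : ℝ} (hε : 0 < ε) :
    ∃ (g : C(I, E)) (L : ℝ≥0), LipschitzWith L g ∧ ∀ t, dist (g t) (h t) < ε := by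
  obtain ⟨g, hg, hgh, -⟩ := (h.continuous.Icc_extend' (h := zero_le_one)).exists_contDiff_approx 1
    (continuous_const (y := ε)) fun _ => hε
  obtain ⟨L, hL⟩ := (hg.contDiffOn (s := Icc (0 : ℝ) 1)).exists_lipschitzOnWith one_ne_zero
    (convex_Icc 0 1) isCompact_Icc
  refine ⟨⟨fun t => g t, hg.continuous.comp continuous_subtype_val⟩, L, hL.to_restrict, fun t => ?_⟩
  simpa only [IccExtend_val] using! hgh t

/-- Interpolating between the path and a Lipschitz approximation of it, which is used near `p`. -/
theorem exists_lipschitzWith_ballFold_comp (h : C(I, E)) (hr : 0 < r) :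
    ∃ H : C(I, E), (∀ t, dist (H t) (h t) ≤ r) ∧ (∀ t, 6 * r ≤ dist (h t) p → H t = h t) ∧
      ∃ L, LipschitzWith L (ballFold p r ∘ H) := by
  obtain ⟨g, L, hL, hgh⟩ := exists_lipschitzWith_dist_lt h hr
  let H : C(I, E) := ⟨fun t => AffineMap.lineMap (h t) (g t) (ballCutoff p (3 * r) (h t)), by
    have := (lipschitzWith_ballCutoff (p := p) (r := 3 * r)).continuous
    fun_prop⟩
  have hHh : ∀ t, dist (H t) (h t) ≤ r := fun t => by
    have hcut := ballCutoff_mem_Icc (p := p) (r := 3 * r) (h t)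
    calc dist (H t) (h t) = ballCutoff p (3 * r) (h t) * dist (h t) (g t) := by
          rw [← Real.norm_of_nonneg hcut.1, ← dist_lineMap_left]; rfl
      _ ≤ 1 * r := mul_le_mul hcut.2 (dist_comm (g t) (h t) ▸ (hgh t).le) dist_nonneg zero_le_one
      _ = r := one_mul r
  refine ⟨H, hHh, fun t ht => ?_, 3 * L, ?_⟩
  · simp only [H, ContinuousMap.coe_mk]
    rw [ballCutoff_of_le_dist (by positivity) (by linarith), AffineMap.lineMap_apply_zero]
  suffices hfold : ballFold p r ∘ H = ballFold p r ∘ g from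
    hfold ▸ (lipschitzWith_ballFold hr).comp hL
  funext t
  rcases le_total (dist (h t) p) (3 * r) with ht | ht
  · simp only [H, comp_apply, ContinuousMap.coe_mk]
    rw [ballCutoff_of_dist_le (by positivity) ht, AffineMap.lineMap_apply_one]
  · have hH := dist_triangle_left (h t) p (H t)
    have hg := dist_triangle_left (h t) p (g t)
    rw [comp_apply, comp_apply, ballFold_of_le_dist hr (by linarith [hHh t]),
      ballFold_of_le_dist hr (by linarith [hgh t])]

theorem hasFineContractions_closedBall (hr : 0 < r) (hc : IsCompact (closedBall p r)) :
    HasFineContractions (closedBall p r) :=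
  .of_lipschitzWith_retraction hc ⟨p, ball_subset_interior_closedBall (mem_ball_self hr)⟩
    (lipschitzWith_ballFold hr) (ballFold_mem_closedBall hr) fun _ => ballFold_of_dist_le hr

theorem Icc_subset_ballCutoff_image_closedBall (hr : 0 < r) {x : E} (hx : 2 * r ≤ dist x p) :
    Icc 0 1 ⊆ ballCutoff p r '' closedBall p (2 * r) := by
  have hx0 : 0 < dist p x := dist_comm x p ▸ (by positivity : 0 < 2 * r).trans_le hx
  have hy : dist (AffineMap.lineMap p x (2 * r / dist p x)) p = 2 * r := by
    rw [dist_lineMap_left, Real.norm_of_nonneg (by positivity), div_mul_cancel₀ _ hx0.ne']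
  have hsub := (convex_closedBall p (2 * r)).isPreconnected.intermediate_value hy.le
    (mem_closedBall_self (by positivity))
    (lipschitzWith_ballCutoff (p := p) (r := r)).continuous.continuousOn
  rwa [ballCutoff_of_le_dist hr hy.ge, ballCutoff_of_dist_le hr (by simpa using hr.le)] at hsub

theorem exists_lipschitzWith_ballFold_comp_of_closedBall_subset {X : Set E} (hr : 0 < r)
    (hX : closedBall p (7 * r) ⊆ X) (h : C(I, X)) :
    ∃ H : C(I, X), (∀ t, 6 * r ≤ dist (h t : E) p → H t = h t) ∧
      ∃ L, LipschitzWith L fun t => ballFold p r (H t : E) := by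
  obtain ⟨H, hHh, hHfar, hHL⟩ :=
    exists_lipschitzWith_ballFold_comp (p := p) (.comp ⟨_, continuous_subtype_val⟩ h) hr
  simp only [ContinuousMap.comp_apply, ContinuousMap.coe_mk] at hHh hHfar
  have hHX : ∀ t, H t ∈ X := fun t => by
    rcases le_total (6 * r) (dist (h t : E) p) with ht | ht
    · exact hHfar t ht ▸ (h t).2
    · exact hX (by rw [mem_closedBall]; linarith [dist_triangle (H t) (h t) p, hHh t])
  exact ⟨⟨fun t => ⟨H t, hHX t⟩, by fun_prop⟩, fun t ht => Subtype.ext (hHfar t ht), hHL⟩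

theorem exists_lipschitzWith_dilation {X : Set E} {c : ℝ≥0} (hc : 0 < c)
    (hX : closedBall p (c * r) ⊆ X) : ∃ d : closedBall p r → X, LipschitzWith c d ∧
      ∀ x : X, dist (x : E) p ≤ c * r → x ∈ range d := by
  have hmem : ∀ x : closedBall p r, p + (c : ℝ) • ((x : E) - p) ∈ X := fun x => hX <| by
    rw [mem_closedBall, dist_self_add_left, norm_smul, ← dist_eq_norm, NNReal.norm_eq]
    gcongr
    exact x.2
  refine ⟨fun x => ⟨_, hmem x⟩, LipschitzWith.of_dist_le_mul fun x y => ?_, fun x hx => ?_⟩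
  · simp only [Subtype.dist_eq]
    rw [dist_add_left, dist_smul₀, dist_sub_right, NNReal.norm_eq]
  · refine ⟨⟨p + (c : ℝ)⁻¹ • ((x : E) - p), ?_⟩, Subtype.ext ?_⟩
    · rw [mem_closedBall, dist_self_add_left, norm_smul, ← dist_eq_norm, norm_inv, NNReal.norm_eq]
      exact (inv_mul_le_iff₀ (NNReal.coe_pos.2 hc)).2 hx
    · simp [hc.ne']

/-- A dilation of `closedBall p r` covers the part of `X` near `p`, and a path in `X`,
parametrized by `ballCutoff p (r / 2)`, covers the rest. -/
theorem isTopologicalFractal_of_interior_nonempty {X : Set E} (h : C(I, X)) (hs : Surjective h)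
    (hint : (interior X).Nonempty) : IsTopologicalFractal X := by
  obtain ⟨p, hp⟩ := hint
  obtain ⟨s, hs0, hsX⟩ := nhds_basis_closedBall.mem_iff.1 (mem_interior_iff_mem_nhds.1 hp)
  obtain ⟨r, hr, rfl⟩ : ∃ r > 0, 7 * r = s := ⟨s / 7, by positivity, by ring⟩
  obtain ⟨H, hHfar, L, hL⟩ := exists_lipschitzWith_ballFold_comp_of_closedBall_subset hr hsX h
  obtain ⟨dilate, hdilate, hnear⟩ := exists_lipschitzWith_dilation (c := 7) (by norm_num) hsX
  have hKX : closedBall p r ⊆ X := (closedBall_subset_closedBall (by linarith)).trans hsX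
  have : CompactSpace X := hs.compactSpace h.continuous
  have hK : IsCompact (closedBall p r) :=
    (isCompact_iff_compactSpace.2 this).of_isClosed_subset isClosed_closedBall hKX
  have := isCompact_iff_compactSpace.1 hK
  let ρ : X → closedBall p r := fun x => ⟨ballFold p r (x : E), ballFold_mem_closedBall hr (x : E)⟩
  have hρ : LipschitzWith (3 * 1) ρ :=
    ((lipschitzWith_ballFold hr).comp (LipschitzWith.subtype_val X)).subtype_mk _
  have hρH : LipschitzWith L (ρ ∘ H) := hL.subtype_mk _
  let param : closedBall p r → I := fun x => ⟨ballCutoff p (r / 2) x, ballCutoff_mem_Icc _⟩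
  have hparam : LipschitzWith (‖(r / 2)⁻¹‖₊ * 1) param :=
    (lipschitzWith_ballCutoff.comp (LipschitzWith.subtype_val _)).subtype_mk _
  refine .of_lipschitzWith_comp (hasFineContractions_closedBall hr hK) hρ.continuous
    (fun y => ⟨⟨y, hKX y.2⟩, Subtype.ext (ballFold_of_dist_le hr y.2)⟩)
    (Γ := {dilate, H ∘ param}) (toFinite _) ?_ (fun x => ?_) ?_
  · rintro _ (rfl | rfl)
    exacts [hdilate.continuous, H.continuous.comp hparam.continuous]
  · rcases le_total (dist (x : E) p) (7 * r) with hx | hx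
    · exact ⟨dilate, .inl rfl, hnear x hx⟩
    · obtain ⟨t, rfl⟩ := hs x
      obtain ⟨y, hy, hyt⟩ := Icc_subset_ballCutoff_image_closedBall (half_pos hr) (p := p)
        (x := (h t : E)) (by linarith) t.2
      rw [mul_div_cancel₀ _ two_ne_zero] at hy
      refine ⟨H ∘ param, .inr rfl, ⟨y, hy⟩, ?_⟩
      rw [← hHfar t (by linarith)]
      exact congrArg H (Subtype.ext hyt)
  · rintro _ (rfl | rfl)
    exacts [⟨_, hρ.comp hdilate⟩, ⟨_, hρH.comp hparam⟩]

end Interior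

section Plateaus

open MeasureTheory ProbabilityTheory

theorem exists_lipschitzWith_monotone_of_expansion {ψ : I → ℝ} {c : ℝ≥0}
    (hψ : ∀ x y : I, x ≤ y → ψ x + (y - x) ≤ ψ y) (h0 : 0 ≤ ψ 0) (h1 : ψ 1 ≤ c) :
    ∃ m : I → I, Monotone m ∧ LipschitzWith c m ∧ Surjective m ∧
      ∀ x t : I, ψ x ≤ (c : ℝ) * t → (∀ y > x, (c : ℝ) * t < ψ y) → m t = x := by
  let m : I → I := fun t => sSup {x : I | ψ x ≤ (c : ℝ) * t}
  have le_m : ∀ {x t : I}, ψ x ≤ (c : ℝ) * t → x ≤ m t := fun h => le_sSup h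
  have m_le : ∀ {t b : I}, (∀ x : I, ψ x ≤ (c : ℝ) * t → x ≤ b) → m t ≤ b := fun h => sSup_le h
  have hm : Monotone m := fun t t' htt =>
    m_le fun x hx => le_m (hx.trans (by gcongr))
  have hexp : ∀ t t' : I, t ≤ t' → (m t' : ℝ) ≤ m t + (c : ℝ) * (t' - t) := by
    intro t t' htt
    by_contra! hlt
    have hd : 0 ≤ (c : ℝ) * (t' - t) := mul_nonneg c.2 (sub_nonneg.2 htt)
    let b : I := ⟨m t + (c : ℝ) * (t' - t), add_nonneg (m t).2.1 hd, hlt.le.trans (m t').2.2⟩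
    obtain ⟨x, hx, hbx⟩ := lt_sSup_iff.1 (show b < m t' from hlt)
    replace hbx : (m t : ℝ) + (c : ℝ) * (t' - t) < x := hbx
    have hx' : (x : ℝ) - (c : ℝ) * (t' - t) ∈ I :=
      ⟨by linarith [(m t).2.1], by linarith [x.2.2]⟩
    have hle := hψ ⟨_, hx'⟩ x (Subtype.mk_le_mk.2 (sub_le_self _ hd))
    have : (x : ℝ) - (c : ℝ) * (t' - t) ≤ m t := le_m (x := ⟨_, hx'⟩) (by
      have : ψ x ≤ (c : ℝ) * t' := hx
      simp only at hle
      linarith)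
    linarith
  have hlip : LipschitzWith c m := LipschitzWith.of_dist_le_mul fun t t' => by
    wlog htt : t ≤ t' generalizing t t'
    · rw [dist_comm, dist_comm t]
      exact this t' t (le_of_not_ge htt)
    rw [dist_comm, dist_comm t, Subtype.dist_eq, Subtype.dist_eq, Real.dist_eq, Real.dist_eq,
      abs_of_nonneg (sub_nonneg.2 (show (m t : ℝ) ≤ m t' from hm htt)),
      abs_of_nonneg (sub_nonneg.2 (show (t : ℝ) ≤ t' from htt))]
    linarith [hexp t t' htt]
  have hm0 : m 0 ≤ 0 := m_le fun x hx => by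
    have := hψ 0 x x.2.1
    simp only [Icc.coe_zero, mul_zero] at hx this
    exact Subtype.coe_le_coe.1 (by simp only [Icc.coe_zero]; linarith)
  have hm1 : 1 ≤ m 1 := le_m (by simpa using h1)
  refine ⟨m, hm, hlip, fun x => mem_range_of_exists_le_of_exists_ge hlip.continuous
    ⟨0, hm0.trans x.2.1⟩ ⟨1, le_trans x.2.2 hm1⟩, fun x t hx hy => ?_⟩
  exact le_antisymm (m_le fun y hyt => not_lt.1 fun hxy => hyt.not_gt (hy y hxy)) (le_m hx)

theorem exists_isProbabilityMeasure_singleton_pos {α : Type*} [MeasurableSpace α]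
    [MeasurableSingletonClass α] (s : ℕ → α) :
    ∃ μ : Measure α, IsProbabilityMeasure μ ∧ ∀ n, 0 < μ.real {s n} := by
  have hs : Measurable s := measurable_from_nat
  refine ⟨(poissonMeasure 1).map s, Measure.isProbabilityMeasure_map hs.aemeasurable, fun n => ?_⟩
  rw [map_measureReal_apply hs (measurableSet_singleton _)]
  exact (poissonMeasure_real_singleton_pos n one_pos).trans_le
    (measureReal_mono (singleton_subset_iff.2 rfl))

/-- Up to the factor `2`, the map is the inverse of the identity plus the distribution function of
a measure with an atom at each `s n`. -/
theorem exists_lipschitzWith_monotone_preimage_nontrivial (s : ℕ → I) :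
    ∃ m : I → I, Monotone m ∧ LipschitzWith 2 m ∧ Surjective m ∧
      ∀ n, (m ⁻¹' {s n}).Nontrivial := by
  obtain ⟨μ, _, hμ⟩ := exists_isProbabilityMeasure_singleton_pos s
  have hIic : ∀ x, μ.real (Iic x) = μ.real (Iio x) + μ.real {x} := fun x => by
    rw [← measureReal_union (by simp) (measurableSet_singleton x), Iio_union_right]
  have hle : ∀ A : Set I, μ.real A ≤ 1 := fun _ => measureReal_le_one
  obtain ⟨m, hm, hlip, hsurj, hfib⟩ :=
    exists_lipschitzWith_monotone_of_expansion (ψ := fun x => x + μ.real (Iio x)) (c := 2)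
      (fun x y hxy => by
        have : μ.real (Iio x) ≤ μ.real (Iio y) := measureReal_mono (Iio_subset_Iio hxy)
        linarith)
      (add_nonneg (0 : I).2.1 measureReal_nonneg) (by have := hle (Iio 1); norm_num; linarith)
  have hplateau : ∀ n, ∀ u ∈ Icc (μ.real (Iio (s n))) (μ.real (Iic (s n))),
      ∃ t : I, (t : ℝ) = (s n + u) / 2 ∧ m t = s n := fun n u hu => by
    have hu0 : 0 ≤ u := measureReal_nonneg.trans hu.1
    refine ⟨⟨(s n + u) / 2, by linarith [(s n).2.1],
      by linarith [(s n).2.2, hu.2, hle (Iic (s n))]⟩, rfl, hfib _ _ ?_ fun y hy => ?_⟩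
    · simp only [NNReal.coe_ofNat]
      linarith [hu.1]
    · have hy' : ((s n : I) : ℝ) < y := hy
      have : μ.real (Iic (s n)) ≤ μ.real (Iio y) := measureReal_mono (Iic_subset_Iio.2 hy)
      simp only [NNReal.coe_ofNat]
      linarith [hu.2]
  refine ⟨m, hm, hlip, hsurj, fun n => ?_⟩
  have hlt : μ.real (Iio (s n)) < μ.real (Iic (s n)) := by linarith [hIic (s n), hμ n]
  obtain ⟨t, ht, hmt⟩ := hplateau n _ (left_mem_Icc.2 hlt.le)
  obtain ⟨t', ht', hmt'⟩ := hplateau n _ (right_mem_Icc.2 hlt.le)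
  refine ⟨t, hmt, t', hmt', fun h => ?_⟩
  rw [h] at ht
  linarith

theorem exists_preimage_singleton_eq_Icc {m : I → I} (hm : Monotone m) (hc : Continuous m)
    (hs : Surjective m) (s : I) : ∃ l r, l ≤ r ∧ m ⁻¹' {s} = Icc l r := by
  have hne : (m ⁻¹' {s}).Nonempty := hs s
  have heq := eq_Icc_of_connected_compact
    ⟨hne, (ordConnected_singleton.preimage_mono hm).isPreconnected⟩
    (isClosed_singleton.preimage hc).isCompact
  exact ⟨_, _, nonempty_Icc.1 (heq ▸ hne), heq⟩

end Plateaus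

section BranchProjection

open TopologicalSpace

/-- A projection `ρ` of `X` onto `T` with a section `τ`, not assumed continuous, such that `ρ` is
locally constant off the base `range τ`. The fibre over `s` is the branch of `X` attached to the
base at `τ s`. -/
structure IsBranchProjection {X T : Type*} [TopologicalSpace X] [TopologicalSpace T]
    (ρ : X → T) (τ : T → X) : Prop where
  continuous : Continuous ρ
  rightInverse : RightInverse τ ρ
  eventually_eq : ∀ x ∉ range τ, ∀ᶠ y in 𝓝 x, ρ y = ρ x

open Classical in
/-- The map fixing the branch over `s` pointwise and collapsing the other branches to the point
`τ s` at which that branch is attached. -/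
noncomputable def branchRetraction {X T : Type*} (ρ : X → T) (τ : T → X) (s : T) (x : X) : X :=
  if ρ x = s then x else τ s

namespace IsBranchProjection

variable {X T : Type*} [TopologicalSpace X] [TopologicalSpace T] {ρ : X → T} {τ : T → X}

theorem apply_branchRetraction (h : IsBranchProjection ρ τ) (s : T) (x : X) :
    ρ (branchRetraction ρ τ s x) = s := by
  unfold branchRetraction
  split_ifs with hx
  exacts [hx, h.rightInverse s]

theorem branchRetraction_section (h : IsBranchProjection ρ τ) (s t : T) :
    branchRetraction ρ τ s (τ t) = τ s := by
  unfold branchRetraction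
  split_ifs with ht
  · rw [← ht, h.rightInverse t]
  · rfl

theorem continuous_branchRetraction [T1Space T] (h : IsBranchProjection ρ τ) (s : T) :
    Continuous (branchRetraction ρ τ s) := by
  refine continuous_iff_continuousAt.2 fun x => ?_
  by_cases hx : ρ x = s
  · by_cases hx' : x ∈ range τ
    · obtain ⟨t, rfl⟩ := hx'
      obtain rfl : t = s := (h.rightInverse t).symm.trans hx
      rw [ContinuousAt, h.branchRetraction_section]
      exact fun U hU => mem_map.2 <| mem_of_superset hU fun y hy => by
        unfold branchRetraction
        rw [mem_preimage]
        split_ifs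
        exacts [hy, mem_of_mem_nhds hU]
    · refine continuousAt_id.congr ?_
      filter_upwards [h.eventually_eq x hx'] with y hy
      exact (if_pos (hy.trans hx)).symm
  · refine (continuousAt_const (y := τ s)).congr ?_
    filter_upwards [h.continuous.continuousAt.eventually_ne hx] with y hy
    exact (if_neg hy).symm

theorem eventually_preimage_singleton_subset [CompactSpace X] [T2Space T]
    (h : IsBranchProjection ρ τ) (s : T) {U : Set X} (hU : U ∈ 𝓝 (τ s)) :
    ∀ᶠ t in 𝓝[≠] s, ρ ⁻¹' {t} ⊆ U := by
  have hK : IsCompact ((interior U)ᶜ \ interior (ρ ⁻¹' {s})) :=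
    (isOpen_interior.isClosed_compl.sdiff isOpen_interior).isCompact
  have hs : s ∉ ρ '' ((interior U)ᶜ \ interior (ρ ⁻¹' {s})) := by
    rintro ⟨x, ⟨hxU, hxs⟩, rfl⟩
    by_cases hx : x ∈ range τ
    · obtain ⟨t, rfl⟩ := hx
      exact hxU (mem_interior_iff_mem_nhds.2 (h.rightInverse t ▸ hU))
    · exact hxs (mem_interior_iff_mem_nhds.2 (h.eventually_eq x hx))
  filter_upwards [nhdsWithin_le_nhds ((hK.image h.continuous).isClosed.isOpen_compl.mem_nhds hs),
    self_mem_nhdsWithin] with t ht hne x hx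
  by_contra hxU
  exact ht ⟨x, ⟨fun hi => hxU (interior_subset hi),
    fun hi => hne (hx.symm.trans (interior_subset hi : x ∈ ρ ⁻¹' {s}))⟩, hx⟩

theorem continuous_of_continuousOn_preimage [CompactSpace X] [T2Space T] {Z : Type*}
    [TopologicalSpace Z] (h : IsBranchProjection ρ τ) {F : Z → X} (hρF : Continuous (ρ ∘ F))
    (hF : ∀ s, ContinuousOn F (ρ ∘ F ⁻¹' {s}))
    (hfr : ∀ s, ∀ z ∈ frontier (ρ ∘ F ⁻¹' {s}), F z = τ s) : Continuous F := by
  refine continuous_iff_continuousAt.2 fun z => ?_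
  set B := ρ ∘ F ⁻¹' {ρ (F z)}
  by_cases hz : z ∈ interior B
  · exact (hF _).continuousAt (mem_interior_iff_mem_nhds.1 hz)
  have hFz : F z = τ (ρ (F z)) := hfr _ z ⟨subset_closure rfl, hz⟩
  rw [← continuousWithinAt_univ, ← union_compl_self B, continuousWithinAt_union]
  refine ⟨hF _ z rfl, fun U hU => ?_⟩
  rw [hFz] at hU
  have htends : Tendsto (ρ ∘ F) (𝓝[Bᶜ] z) (𝓝[≠] ρ (F z)) :=
    tendsto_nhdsWithin_iff.2 ⟨hρF.continuousAt.mono_left nhdsWithin_le_nhds, self_mem_nhdsWithin⟩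
  exact (htends.eventually (h.eventually_preimage_singleton_subset _ hU)).mono fun y hy => hy rfl

theorem apply_mem_range_comp_denseSeq [SeparableSpace X] [Nonempty X]
    (h : IsBranchProjection ρ τ) {x : X} (hx : x ∉ range τ) : ρ x ∈ range (ρ ∘ denseSeq X) := by
  obtain ⟨n, hn⟩ := (denseRange_denseSeq X).mem_nhds (h.eventually_eq x hx)
  exact ⟨n, hn⟩

theorem exists_continuous_loop_onto_branch [T1Space T] [PathConnectedSpace X]
    (h : IsBranchProjection ρ τ) {p : C(I, X)} (hp : Surjective p) (s : T) {l r : I} (hlr : l ≤ r) :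
    ∃ G : I → X, Continuous G ∧ (∀ t, ρ (G t) = s) ∧ G l = τ s ∧ G r = τ s ∧
      (l < r → ρ ⁻¹' {s} ⊆ G '' Icc l r) := by
  obtain rfl | hlt := hlr.eq_or_lt
  · exact ⟨fun _ => τ s, continuous_const, fun _ => h.rightInverse s, rfl, rfl,
      fun hlt => (lt_irrefl _ hlt).elim⟩
  replace hlt : (l : ℝ) < r := hlt
  obtain ⟨q, hq⟩ := exists_surjective_loop p hp (τ s)
  refine ⟨fun t => branchRetraction ρ τ s (q.extend ((t - l) / (r - l))),
    (h.continuous_branchRetraction s).comp (q.continuous_extend.comp (by fun_prop)),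
    fun t => h.apply_branchRetraction _ _, ?_, ?_, fun _ x hx => ?_⟩
  · simp only [sub_self, zero_div, Path.extend_zero, h.branchRetraction_section]
  · simp only [div_self (sub_ne_zero.2 hlt.ne'), Path.extend_one, h.branchRetraction_section]
  · obtain ⟨u, rfl⟩ := hq x
    obtain ⟨t, rfl⟩ := (iccHomeoI _ _ hlt).surjective u
    refine ⟨⟨t, l.2.1.trans t.2.1, t.2.2.trans r.2.2⟩, t.2, ?_⟩
    simp only [← iccHomeoI_apply_coe _ _ hlt, Path.extend_extends']
    exact if_pos hx

theorem exists_surjective_lipschitzWith_comp [CompactSpace X] [SeparableSpace X]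
    [PathConnectedSpace X] {ρ : X → I} {τ : I → X} (h : IsBranchProjection ρ τ) {p : C(I, X)}
    (hp : Surjective p) :
    ∃ γ : I → X, Continuous γ ∧ Surjective γ ∧ LipschitzWith 2 (ρ ∘ γ) := by
  obtain ⟨m, hm, hlip, hsurj, hfib⟩ :=
    exists_lipschitzWith_monotone_preimage_nontrivial (ρ ∘ denseSeq X)
  choose l r hlr hIcc using exists_preimage_singleton_eq_Icc hm hlip.continuous hsurj
  choose G hG hρG hGl hGr hGs using fun s => h.exists_continuous_loop_onto_branch hp s (hlr s)
  let γ (t : I) : X := G (m t) t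
  have hρ : ρ ∘ γ = m := funext fun t => hρG _ _
  have hγ : ∀ {s t}, t ∈ Icc (l s) (r s) → γ t = G s t := fun {s _} ht =>
    congrArg (G · _) ((hIcc s).ge ht)
  refine ⟨γ, ?_, fun x => ?_, by rwa [hρ]⟩
  · refine h.continuous_of_continuousOn_preimage (by rw [hρ]; exact hlip.continuous)
      (fun s => ?_) fun s t ht => ?_
    · rw [hρ, hIcc]
      exact (hG s).continuousOn.congr fun t ht => hγ ht
    · rw [hρ, hIcc, isClosed_Icc.frontier_eq] at ht
      have hend := sdiff_subset_sdiff_right (interior_maximal Ioo_subset_Icc_self isOpen_Ioo) ht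
      rw [Icc_sdiff_Ioo_same (hlr s)] at hend
      rw [hγ ht.1]
      obtain rfl | rfl := hend
      exacts [hGl s, hGr s]
  · by_cases hx : x ∈ range τ
    · obtain ⟨s, rfl⟩ := hx
      exact ⟨l s, (hγ (left_mem_Icc.2 (hlr s))).trans (hGl s)⟩
    · obtain ⟨n, hn⟩ := h.apply_mem_range_comp_denseSeq hx
      have hnt : (Icc (l (ρ x)) (r (ρ x))).Nontrivial := by
        rw [← hIcc, ← hn]
        exact hfib n
      have hlt : l (ρ x) < r (ρ x) :=
        not_le.1 fun hle => hnt.not_subsingleton (subsingleton_Icc_of_ge hle)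
      obtain ⟨t, ht, htx⟩ := hGs (ρ x) hlt rfl
      exact ⟨t, (hγ ht).trans htx⟩

theorem isTopologicalFractal {X : Type*} [MetricSpace X] [CompactSpace X] [PathConnectedSpace X]
    {ρ : X → I} {τ : I → X} (h : IsBranchProjection ρ τ) {p : C(I, X)} (hp : Surjective p) :
    IsTopologicalFractal X := by
  obtain ⟨γ, hγ, hγs, hlip⟩ := h.exists_surjective_lipschitzWith_comp hp
  exact .of_lipschitzWith_comp hasFineContractions_unitInterval h.continuous
    h.rightInverse.surjective (finite_singleton γ) (by rintro _ rfl; exact hγ)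
    (fun x => ⟨γ, rfl, hγs x⟩) (by rintro _ rfl; exact ⟨2, hlip⟩)

end IsBranchProjection

end BranchProjection

section NonvanishingPerturbation

open MeasureTheory

variable {E F : Type*} [NormedAddCommGroup E] [NormedSpace ℝ E]
  [NormedAddCommGroup F] [NormedSpace ℝ F]

theorem finite_inter_preimage_singleton_of_det_fderiv_ne_zero [FiniteDimensional ℝ E] {g : E → E}
    {K : Set E} {c : E} (hK : IsCompact K) (hg : Continuous g)
    (hd : ∀ z ∈ K, g z = c → DifferentiableAt ℝ g z ∧ (fderiv ℝ g z).det ≠ 0) :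
    (K ∩ g ⁻¹' {c}).Finite := by
  have hcomp : IsCompact (K ∩ g ⁻¹' {c}) := hK.inter_right (isClosed_singleton.preimage hg)
  by_contra hinf
  obtain ⟨z, ⟨hzK, hzc⟩, hz⟩ :=
    Set.Infinite.exists_accPt_of_subset_isCompact hinf hcomp Subset.rfl
  obtain ⟨hdz, hdet⟩ := hd z hzK hzc
  have hne : ∀ᶠ y in 𝓝[≠] z, g y ≠ c := hdz.hasFDerivAt.eventually_ne
    ⟨_, ((fderiv ℝ g z).toContinuousLinearEquivOfDetNeZero hdet).antilipschitz⟩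
  exact accPt_iff_frequently_nhdsNE.1 hz (hne.mono fun y hy h => hy h.2)

theorem dense_setOf_finite_inter_preimage_singleton [FiniteDimensional ℝ E]
    (h : Module.finrank ℝ E = Module.finrank ℝ F) [FiniteDimensional ℝ F] {g : E → F}
    (hg : Differentiable ℝ g) {K : Set E} (hK : IsCompact K) :
    Dense {c | (K ∩ g ⁻¹' {c}).Finite} := by
  borelize E
  let Φ : F ≃L[ℝ] E := .ofFinrankEq h.symm
  have hΦg : Differentiable ℝ (Φ ∘ g) := Φ.differentiable.comp hg
  have hsard := addHaar_image_eq_zero_of_det_fderivWithin_eq_zero Measure.addHaar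
    (s := {x | (fderiv ℝ (Φ ∘ g) x).det = 0})
    (fun x _ => (hΦg x).hasFDerivAt.hasFDerivWithinAt) fun x hx => hx
  have hdense : Dense {c | (K ∩ (Φ ∘ g) ⁻¹' {c}).Finite} :=
    Measure.dense_of_ae ((measure_eq_zero_iff_ae_notMem.1 hsard).mono fun c hc =>
      finite_inter_preimage_singleton_of_det_fderiv_ne_zero hK hΦg.continuous
        fun z _ hz => ⟨hΦg z, fun h0 => hc ⟨z, h0, hz⟩⟩)
  convert hdense.preimage Φ.toHomeomorph.isOpenMap using 1
  ext c
  have : Φ ∘ g ⁻¹' {Φ c} = g ⁻¹' {c} := by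
    ext
    simp
  exact iff_of_eq (congrArg (fun S => (K ∩ S).Finite) this.symm)

theorem dense_setOf_forall_sub_notMem {E : Type*} [NormedAddCommGroup E] [CompleteSpace E]
    {X Z : Set E} (hX : IsClosed X) (hXint : interior X = ∅) (hZ : Z.Countable) :
    Dense {w | ∀ z ∈ Z, z - w ∉ X} := by
  have : {w | ∀ z ∈ Z, z - w ∉ X} = ⋂ z ∈ Z, (Homeomorph.subLeft z ⁻¹' X)ᶜ := by
    ext w
    simp
  rw [this]
  refine dense_biInter_of_isOpen
    (fun z _ => (hX.preimage (Homeomorph.subLeft z).continuous).isOpen_compl) hZ fun z _ => ?_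
  rw [← interior_eq_empty_iff_dense_compl, ← Homeomorph.preimage_interior, hXint, preimage_empty]

/-- A small translation of the argument moves the finitely many zeros of a generic smooth
approximation off `X`. -/
theorem exists_continuous_ne_zero_dist_lt [FiniteDimensional ℝ E] [FiniteDimensional ℝ F]
    (h : Module.finrank ℝ E = Module.finrank ℝ F) {X : Set E} (hX : IsCompact X)
    (hXint : interior X = ∅) {f : E → F} (hf : Continuous f) {ε : ℝ} (hε : 0 < ε) :
    ∃ q : E → F, Continuous q ∧ ∀ x ∈ X, q x ≠ 0 ∧ dist (q x) (f x) < ε := by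
  have hε3 : 0 < ε / 3 := by positivity
  obtain ⟨g, hg, hgf, -⟩ := hf.exists_contDiff_approx 1 (ε := fun _ => ε / 3) continuous_const
    fun _ => hε3
  have hK : IsCompact (cthickening 1 X) := hX.cthickening
  obtain ⟨c, hcfin, hc⟩ := (dense_setOf_finite_inter_preimage_singleton h
    (hg.differentiable one_ne_zero) hK).exists_dist_lt 0 hε3
  obtain ⟨δ, hδ, hδg⟩ := Metric.uniformContinuousOn_iff.1
    (hK.uniformContinuousOn_of_continuous hg.continuous.continuousOn) (ε / 3) hε3
  obtain ⟨w, hw, hwδ⟩ := (dense_setOf_forall_sub_notMem hX.isClosed hXint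
    hcfin.countable).exists_dist_lt 0 (lt_min hδ one_pos)
  rw [dist_zero_left, lt_min_iff] at hwδ
  refine ⟨fun x => g (x + w) - c, by fun_prop (disch := exact hg.continuous), fun x hx => ?_⟩
  have hmem : x + w ∈ cthickening 1 X :=
    mem_cthickening_of_dist_le _ x 1 X hx (by simpa using hwδ.2.le)
  refine ⟨fun h0 => hw (x + w) ⟨hmem, sub_eq_zero.1 h0⟩ (by simpa using hx), ?_⟩
  have hgw := hδg (x + w) hmem x (self_subset_cthickening X hx) (by simpa using hwδ.1)
  have hgc : dist (g (x + w) - c) (g (x + w)) < ε / 3 := by simpa using hc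
  linarith [dist_triangle4 (g (x + w) - c) (g (x + w)) (g x) (f x), hgf x]

end NonvanishingPerturbation

section Unicoherence

open Complex

theorem exists_continuousOn_exp_eq_of_norm_sub_lt {X : Type*} [TopologicalSpace X] {S : Set X}
    {f l : X → ℂ} (hf : ContinuousOn f S) (hl : ContinuousOn l S)
    (h : ∀ z ∈ S, ‖exp (l z) - f z‖ < ‖f z‖) :
    ∃ v : X → ℂ, ContinuousOn v S ∧ ∀ z ∈ S, exp (v z) = f z := by
  have hf0 : ∀ z ∈ S, f z ≠ 0 := fun z hz => norm_pos_iff.1 ((norm_nonneg _).trans_lt (h z hz))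
  have hslit : ∀ z ∈ S, exp (l z) / f z ∈ slitPlane := fun z hz => by
    have hlt : ‖exp (l z) / f z - 1‖ < 1 := by
      rw [div_sub_one (hf0 z hz), norm_div, div_lt_one (norm_pos_iff.2 (hf0 z hz))]
      exact h z hz
    simpa using mem_slitPlane_of_norm_lt_one hlt
  refine ⟨fun z => l z - log (exp (l z) / f z),
    hl.sub (ContinuousOn.clog (hl.cexp.div hf hf0) hslit), fun z hz => ?_⟩
  rw [exp_sub, exp_log (slitPlane_ne_zero (hslit z hz)), div_div_cancel₀ (exp_ne_zero _)]

theorem exists_continuous_exp_eq_of_retraction {E : Type*} [TopologicalSpace E]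
    [SimplyConnectedSpace E] [LocallyPathConnectedSpace E] {X : Set E} {R : C(E, X)}
    (hR : ∀ x : X, R x = x) {q : X → ℂ} (hq : Continuous q) (hq0 : ∀ x, q x ≠ 0) :
    ∃ l : X → ℂ, Continuous l ∧ ∀ x, exp (l x) = q x := by
  obtain ⟨l, hl, hlq⟩ := exists_continuousOn_eqOn_exp_comp (U := (univ : Set E))
    (g := fun z => q (R z)) (Homeomorph.Set.univ E).toHomotopyEquiv.simplyConnectedSpace
    isOpen_univ (by fun_prop) (by rintro ⟨z, -, hz⟩; exact hq0 _ hz)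
  exact ⟨fun x => l x, (continuousOn_univ.1 hl).comp continuous_subtype_val,
    fun x => (hlq (mem_univ (x : E))).trans (congrArg q (hR x))⟩

theorem exists_continuousOn_exp_eq_of_interior_eq_empty {E : Type*} [NormedAddCommGroup E]
    [NormedSpace ℝ E] (hE : Module.finrank ℝ E = 2) {X : Set E} (hX : IsCompact X)
    (hXint : interior X = ∅) {R : C(E, X)} (hR : ∀ x : X, R x = x) {S : Set X} (hS : IsClosed S)
    {f : X → ℂ} (hf : ContinuousOn f S) (hf0 : ∀ z ∈ S, f z ≠ 0) :
    ∃ v : X → ℂ, ContinuousOn v S ∧ ∀ z ∈ S, exp (v z) = f z := by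
  have := FiniteDimensional.of_finrank_pos (hE ▸ two_pos)
  have := isCompact_iff_compactSpace.1 hX
  obtain ⟨g, hg⟩ := ContinuousMap.exists_restrict_eq hS
    (⟨S.domRestrict f, hf.domRestrict⟩ : C(S, ℂ))
  have hgf : ∀ z ∈ S, g z = f z := fun z hz => DFunLike.congr_fun hg ⟨z, hz⟩
  obtain ⟨ε, hε, hεf⟩ := hS.isCompact.exists_forall_le' hf.norm
    fun z hz => norm_pos_iff.2 (hf0 z hz)
  obtain ⟨q, hq, hqX⟩ := exists_continuous_ne_zero_dist_lt (hE.trans finrank_real_complex.symm) hX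
    hXint (f := fun z => g (R z)) (by fun_prop) hε
  obtain ⟨l, hl, hlq⟩ := exists_continuous_exp_eq_of_retraction hR
    (hq.comp continuous_subtype_val) fun x => (hqX x x.2).1
  refine exists_continuousOn_exp_eq_of_norm_sub_lt hf hl.continuousOn fun z hz => ?_
  have hdist := (hqX z z.2).2
  rw [hR, hgf z hz, dist_eq_norm] at hdist
  rw [hlq]
  exact hdist.trans_le (hεf z hz)

theorem eq_of_isPreconnected_of_exp_eq_one {X : Type*} [TopologicalSpace X] {S : Set X}
    (hS : IsPreconnected S) {v : X → ℂ} (hv : ContinuousOn v S) (h1 : ∀ z ∈ S, exp (v z) = 1)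
    {x y : X} (hx : x ∈ S) (hy : y ∈ S) : v x = v y :=
  isCoveringMap_exp.constOn_of_comp hS hv
    (fun z hz z' hz' => Subtype.ext ((h1 z hz).trans (h1 z' hz').symm)) hx hy

/-- A logarithm of the map equal to `exp ∘ w` on `A` and to `1` on `B` differs from `w` by a
constant on `A` and is constant on `B`. -/
theorem eq_of_exists_continuousOn_exp_eq {X : Type*} [TopologicalSpace X] {A B : Set X}
    (hA : IsClosed A) (hB : IsClosed B) (hAc : IsPreconnected A) (hBc : IsPreconnected B)
    (hlog : ∀ f : X → ℂ, ContinuousOn f (A ∪ B) → (∀ z ∈ A ∪ B, f z ≠ 0) →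
      ∃ v : X → ℂ, ContinuousOn v (A ∪ B) ∧ ∀ z ∈ A ∪ B, exp (v z) = f z)
    {w : X → ℂ} (hw : Continuous w) (hw1 : ∀ z ∈ A ∩ B, exp (w z) = 1) {x y : X}
    (hx : x ∈ A ∩ B) (hy : y ∈ A ∩ B) : w x = w y := by
  classical
  let f : X → ℂ := fun z => if z ∈ A then exp (w z) else 1
  have hfA : ∀ z ∈ A, f z = exp (w z) := fun z hz => if_pos hz
  have hfB : ∀ z ∈ B, f z = 1 := fun z hz => ite_eq_right_iff.2 fun hzA => hw1 z ⟨hzA, hz⟩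
  have hf0 : ∀ z, f z ≠ 0 := fun z => by
    simp only [f]
    split_ifs
    exacts [exp_ne_zero _, one_ne_zero]
  obtain ⟨v, hv, hvf⟩ := hlog f ((hw.cexp.continuousOn.congr hfA).union_of_isClosed
    (continuousOn_const.congr hfB) hA hB) fun z _ => hf0 z
  have hvB : v x = v y := eq_of_isPreconnected_of_exp_eq_one hBc (hv.mono subset_union_right)
    (fun z hz => (hvf z (.inr hz)).trans (hfB z hz)) hx.2 hy.2
  have hvA : w x - v x = w y - v y :=
    eq_of_isPreconnected_of_exp_eq_one (v := fun z => w z - v z) hAc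
      (hw.continuousOn.sub (hv.mono subset_union_left))
      (fun z hz => by rw [exp_sub, hvf z (.inl hz), hfA z hz, div_self (exp_ne_zero _)]) hx.1 hy.1
  rwa [hvB, sub_left_inj] at hvA

theorem isPreconnected_inter_of_exists_continuousOn_exp_eq {X : Type*} [TopologicalSpace X]
    [NormalSpace X] {A B : Set X} (hA : IsClosed A) (hB : IsClosed B) (hAc : IsPreconnected A)
    (hBc : IsPreconnected B)
    (hlog : ∀ f : X → ℂ, ContinuousOn f (A ∪ B) → (∀ z ∈ A ∪ B, f z ≠ 0) →
      ∃ v : X → ℂ, ContinuousOn v (A ∪ B) ∧ ∀ z ∈ A ∪ B, exp (v z) = f z) :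
    IsPreconnected (A ∩ B) := by
  rw [isPreconnected_iff_subset_of_fully_disjoint_closed (hA.inter hB)]
  intro P Q hP hQ hPQ hdisj
  by_contra! hcon
  obtain ⟨y, hyAB, hyP⟩ := not_subset.1 hcon.1
  obtain ⟨x, hxAB, hxQ⟩ := not_subset.1 hcon.2
  obtain ⟨u, hu0, hu1, -⟩ := exists_continuous_zero_one_of_isClosed hP hQ hdisj
  have hux : u x = 0 := hu0 ((hPQ hxAB).resolve_right hxQ)
  have huy : u y = 1 := hu1 ((hPQ hyAB).resolve_left hyP)
  have huAB : ∀ z ∈ A ∩ B, exp (u z * (2 * Real.pi * Complex.I)) = 1 := fun z hz => by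
    obtain h | h := hPQ hz
    · simp [hu0 h]
    · simp [hu1 h]
  have hxy := eq_of_exists_continuousOn_exp_eq hA hB hAc hBc hlog (by fun_prop) huAB hxAB hyAB
  rw [hux, huy, ofReal_zero, zero_mul, ofReal_one, one_mul] at hxy
  exact two_pi_I_ne_zero hxy.symm

/-- A space in which the intersection of any two closed connected subsets is connected; such a
subset is allowed to be empty. -/
def IsHereditarilyUnicoherent (X : Type*) [TopologicalSpace X] : Prop :=
  ∀ A B : Set X, IsClosed A → IsClosed B → IsPreconnected A → IsPreconnected B →
    IsPreconnected (A ∩ B)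

theorem isHereditarilyUnicoherent_of_interior_eq_empty {E : Type*} [NormedAddCommGroup E]
    [NormedSpace ℝ E] (hE : Module.finrank ℝ E = 2) {X : Set E} (hX : IsCompact X)
    (hXint : interior X = ∅) {R : C(E, X)} (hR : ∀ x : X, R x = x) :
    IsHereditarilyUnicoherent X := fun _ _ hA hB hAc hBc =>
  isPreconnected_inter_of_exists_continuousOn_exp_eq hA hB hAc hBc fun _ =>
    exists_continuousOn_exp_eq_of_interior_eq_empty hE hX hXint hR (hA.union hB)

end Unicoherence

section ContinuumHull

/-- The intersection of all closed connected sets containing two given points. In a hereditarily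
unicoherent continuum it is the smallest subcontinuum containing them. -/
def continuumHull {X : Type*} [TopologicalSpace X] (x y : X) : Set X :=
  ⋂₀ {K | IsClosed K ∧ IsPreconnected K ∧ x ∈ K ∧ y ∈ K}

variable {X : Type*} [TopologicalSpace X] {a b x y : X}

theorem isClosed_continuumHull : IsClosed (continuumHull x y) :=
  isClosed_sInter fun _ hK => hK.1

theorem left_mem_continuumHull : x ∈ continuumHull x y := fun _ hK => hK.2.2.1

theorem right_mem_continuumHull : y ∈ continuumHull x y := fun _ hK => hK.2.2.2

theorem continuumHull_subset {K : Set X} (hK : IsClosed K) (hKc : IsPreconnected K) (hx : x ∈ K)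
    (hy : y ∈ K) : continuumHull x y ⊆ K :=
  sInter_subset_of_mem ⟨hK, hKc, hx, hy⟩

theorem continuumHull_comm : continuumHull x y = continuumHull y x := by
  simp only [continuumHull, and_comm (a := x ∈ _)]

theorem continuumHull_self [T1Space X] : continuumHull x x = {x} :=
  (continuumHull_subset isClosed_singleton isPreconnected_singleton rfl rfl).antisymm
    (singleton_subset_iff.2 left_mem_continuumHull)

theorem isPreconnected_iInter_of_directed [T2Space X] {ι : Type*} [Nonempty ι] {K : ι → Set X}
    (hdir : Directed (· ⊇ ·) K) (hK : ∀ i, IsCompact (K i)) (hKc : ∀ i, IsPreconnected (K i)) :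
    IsPreconnected (⋂ i, K i) := by
  have hcl : IsClosed (⋂ i, K i) := isClosed_iInter fun i => (hK i).isClosed
  have hcomp : IsCompact (⋂ i, K i) :=
    (hK (Classical.arbitrary ι)).of_isClosed_subset hcl (iInter_subset _ _)
  rw [isPreconnected_iff_subset_of_fully_disjoint_closed hcl]
  intro P Q hP hQ hPQ hdisj
  obtain ⟨U, V, hU, hV, hPU, hQV, hUV⟩ := SeparatedNhds.of_isCompact_isCompact
    (hcomp.inter_right hP) (hcomp.inter_right hQ)
    (hdisj.mono inter_subset_right inter_subset_right)
  have hsub : ⋂ i, K i ⊆ U ∪ V := fun z hz =>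
    (hPQ hz).imp (fun h => hPU ⟨hz, h⟩) fun h => hQV ⟨hz, h⟩
  obtain ⟨i, hi⟩ := exists_subset_nhds_of_isCompact hdir hK
    fun z hz => (hU.union hV).mem_nhds (hsub hz)
  refine (isPreconnected_iff_subset_of_disjoint.1 (hKc i) U V hU hV hi
    (by rw [hUV.inter_eq, inter_empty])).imp (fun h z hz => ?_) fun h z hz => ?_
  · exact (hPQ hz).resolve_right fun hzQ =>
      disjoint_left.1 hUV (h (iInter_subset K i hz)) (hQV ⟨hz, hzQ⟩)
  · exact (hPQ hz).resolve_left fun hzP =>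
      disjoint_left.1 hUV (hPU ⟨hz, hzP⟩) (h (iInter_subset K i hz))

theorem isPreconnected_continuumHull [CompactSpace X] [T2Space X] [PreconnectedSpace X]
    (hX : IsHereditarilyUnicoherent X) : IsPreconnected (continuumHull x y) := by
  let F : Set (Set X) := {K | IsClosed K ∧ IsPreconnected K ∧ x ∈ K ∧ y ∈ K}
  have : Nonempty F := ⟨univ, isClosed_univ, isPreconnected_univ, mem_univ x, mem_univ y⟩
  rw [continuumHull, sInter_eq_iInter]
  refine isPreconnected_iInter_of_directed ?_ (fun K => K.2.1.isCompact) fun K => K.2.2.1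
  rintro ⟨K, hK⟩ ⟨L, hL⟩
  exact ⟨⟨K ∩ L, hK.1.inter hL.1, hX K L hK.1 hL.1 hK.2.1 hL.2.1, ⟨hK.2.2.1, hL.2.2.1⟩,
    hK.2.2.2, hL.2.2.2⟩, inter_subset_left, inter_subset_right⟩

theorem continuumHull_subset_union [CompactSpace X] [T2Space X] [PreconnectedSpace X]
    (hX : IsHereditarilyUnicoherent X) {S : Set X} (hS : IsClosed S) (hSc : IsPreconnected S)
    (hx : x ∈ S) (hy : y ∈ S) : continuumHull a y ⊆ continuumHull a x ∪ S :=
  continuumHull_subset (isClosed_continuumHull.union hS)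
    ((isPreconnected_continuumHull hX).union x right_mem_continuumHull hx hSc)
    (.inl left_mem_continuumHull) (.inr hy)

theorem continuumHull_subset_continuumHull [CompactSpace X] [T2Space X] [PreconnectedSpace X]
    (hX : IsHereditarilyUnicoherent X) (h : y ∈ continuumHull a x) :
    continuumHull a y ⊆ continuumHull a x :=
  continuumHull_subset isClosed_continuumHull (isPreconnected_continuumHull hX)
    left_mem_continuumHull h

theorem closure_connectedComponentIn_compl_singleton_subset (h : a ≠ y) :
    closure (connectedComponentIn {y}ᶜ a) ⊆ insert y (connectedComponentIn {y}ᶜ a) := by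
  set C := connectedComponentIn {y}ᶜ a
  have haC : a ∈ C := mem_connectedComponentIn h
  have hC : C ⊆ closure C \ {y} := fun z hz =>
    ⟨subset_closure hz, connectedComponentIn_subset _ _ hz⟩
  have hsub : closure C \ {y} ⊆ C :=
    (isPreconnected_connectedComponentIn.subset_closure hC
      sdiff_subset).subset_connectedComponentIn (hC haC) fun z hz => hz.2
  rwa [sdiff_singleton_subset_iff] at hsub

theorem mem_closure_connectedComponentIn_compl_singleton [T1Space X] [PreconnectedSpace X]
    [LocallyConnectedSpace X] (h : a ≠ y) : y ∈ closure (connectedComponentIn {y}ᶜ a) := by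
  by_contra hy
  have hcl : IsClosed (connectedComponentIn {y}ᶜ a) := closure_subset_iff_isClosed.1 fun z hz =>
    (closure_connectedComponentIn_compl_singleton_subset h hz).resolve_left fun hzy => hy (hzy ▸ hz)
  have huniv := IsClopen.eq_univ ⟨hcl, isOpen_compl_singleton.connectedComponentIn⟩
    ⟨a, mem_connectedComponentIn h⟩
  exact connectedComponentIn_subset _ _ (huniv.ge (mem_univ y)) rfl

theorem notMem_continuumHull_of_mem_connectedComponentIn [T2Space X]
    [LocallyPathConnectedSpace X] (hx : x ∈ connectedComponentIn {y}ᶜ a) :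
    y ∉ continuumHull a x := by
  have hC : IsPathConnected (connectedComponentIn {y}ᶜ a) :=
    isOpen_compl_singleton.connectedComponentIn.isConnected_iff_isPathConnected.1
      (isConnected_connectedComponentIn_iff.2 (connectedComponentIn_nonempty_iff.1 ⟨x, hx⟩))
  obtain ⟨γ, hγ⟩ := hC.joinedIn a
    (mem_connectedComponentIn (connectedComponentIn_nonempty_iff.1 ⟨x, hx⟩)) x hx
  intro hy
  obtain ⟨t, ht⟩ := continuumHull_subset (isCompact_range γ.continuous).isClosed
    (isPreconnected_range γ.continuous) ⟨0, γ.source⟩ ⟨1, γ.target⟩ hy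
  exact connectedComponentIn_subset _ _ (hγ t) ht

theorem eq_of_mem_continuumHull_of_mem_continuumHull [T2Space X] [PreconnectedSpace X]
    [LocallyPathConnectedSpace X] (hy : y ∈ continuumHull a x) (hx : x ∈ continuumHull a y) :
    x = y := by
  obtain rfl | hay := eq_or_ne a y
  · rwa [continuumHull_self] at hx
  have hhull : continuumHull a y ⊆ closure (connectedComponentIn {y}ᶜ a) :=
    continuumHull_subset isClosed_closure isPreconnected_connectedComponentIn.closure
      (subset_closure (mem_connectedComponentIn hay))
      (mem_closure_connectedComponentIn_compl_singleton hay)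
  exact (closure_connectedComponentIn_compl_singleton_subset hay (hhull hx)).resolve_right
    fun hxC => notMem_continuumHull_of_mem_connectedComponentIn hxC hy

theorem mem_continuumHull_or_mem_continuumHull [CompactSpace X] [T2Space X] [PreconnectedSpace X]
    [LocallyPathConnectedSpace X] (hX : IsHereditarilyUnicoherent X) (hx : x ∈ continuumHull a b)
    (hy : y ∈ continuumHull a b) : x ∈ continuumHull a y ∨ y ∈ continuumHull a x := by
  have hcover : ∀ z, continuumHull a b ⊆ continuumHull a z ∪ continuumHull b z := fun z => by
    rw [continuumHull_comm (x := b)]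
    exact continuumHull_subset_union hX isClosed_continuumHull (isPreconnected_continuumHull hX)
      left_mem_continuumHull right_mem_continuumHull
  by_contra! h
  have hxy := eq_of_mem_continuumHull_of_mem_continuumHull ((hcover x hy).resolve_left h.2)
    ((hcover y hx).resolve_left h.1)
  exact h.1 (hxy ▸ right_mem_continuumHull)

theorem eventually_exists_isPreconnected_subset [T2Space X] [LocallyPathConnectedSpace X]
    {U : Set X} (hU : U ∈ 𝓝 x) :
    ∀ᶠ y in 𝓝 x, ∃ S ⊆ U, IsClosed S ∧ IsPreconnected S ∧ x ∈ S ∧ y ∈ S := by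
  obtain ⟨V, ⟨hV, hVc⟩, hVU⟩ := (path_connected_basis x).mem_iff.1 hU
  filter_upwards [hV] with y hy
  obtain ⟨γ, hγ⟩ := hVc.joinedIn x (mem_of_mem_nhds hV) y hy
  exact ⟨range γ, range_subset_iff.2 fun t => hVU (hγ t),
    (isCompact_range γ.continuous).isClosed, isPreconnected_range γ.continuous,
    ⟨0, γ.source⟩, ⟨1, γ.target⟩⟩

end ContinuumHull

section WhitneySize

theorem summable_pow_mul_infDist {X : Type*} [MetricSpace X] [CompactSpace X] (s : ℕ → X)
    (K : Set X) : Summable fun n => (1 / 2 : ℝ) ^ n * infDist (s n) K := by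
  obtain ⟨C, hC⟩ := (isCompact_range (continuous_infDist_pt K)).bddAbove
  refine (summable_geometric_two.mul_right C).of_nonneg_of_le
    (fun n => mul_nonneg (by positivity) infDist_nonneg) fun n => ?_
  gcongr
  exact hC (mem_range_self (s n))

variable {X : Type*} [MetricSpace X] [CompactSpace X] [Nonempty X] {K L : Set X}

/-- A Whitney map: a size of nonempty closed sets that is strictly monotone and continuous for the
Hausdorff distance. It is the negative of a weighted sum of the distances to the points of a
countable dense set. -/
noncomputable def whitneySize (K : Set X) : ℝ :=
  -∑' n : ℕ, (1 / 2 : ℝ) ^ n * infDist (TopologicalSpace.denseSeq X n) K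

theorem whitneySize_lt_whitneySize (hK : IsClosed K) (hne : K.Nonempty) (hKL : K ⊂ L) :
    whitneySize K < whitneySize L := by
  obtain ⟨z, hzL, hzK⟩ := exists_of_ssubset hKL
  have hr : 0 < infDist z K := (hK.notMem_iff_infDist_pos hne).1 hzK
  obtain ⟨n, hn⟩ := (TopologicalSpace.denseRange_denseSeq X).exists_mem_open isOpen_ball
    ⟨z, mem_ball_self (half_pos hr)⟩
  refine neg_lt_neg ((summable_pow_mul_infDist _ L).tsum_lt_tsum (i := n) (fun m => ?_) ?_
    (summable_pow_mul_infDist _ K))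
  · exact mul_le_mul_of_nonneg_left (infDist_le_infDist_of_subset hKL.1 hne) (by positivity)
  · refine mul_lt_mul_of_pos_left ?_ (by positivity)
    linarith [mem_ball.1 hn, infDist_le_dist_of_mem (x := TopologicalSpace.denseSeq X n) hzL,
      infDist_le_infDist_add_dist (s := K) (x := z) (y := TopologicalSpace.denseSeq X n),
      dist_comm z (TopologicalSpace.denseSeq X n)]

theorem whitneySize_le_add {ε : ℝ} (hL : L.Nonempty) (h : ∀ z ∈ L, ∃ t ∈ K, dist z t ≤ ε) :
    whitneySize L ≤ whitneySize K + 2 * ε := by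
  have hle : ∀ x, infDist x K ≤ infDist x L + ε := fun x => by
    rw [← sub_le_iff_le_add]
    refine (le_infDist hL).2 fun z hz => ?_
    obtain ⟨t, ht, hzt⟩ := h z hz
    linarith [infDist_le_dist_of_mem (x := x) ht, dist_triangle x z t]
  have hsum := (summable_pow_mul_infDist (TopologicalSpace.denseSeq X) K).hasSum
  have hsum' := (summable_pow_mul_infDist (TopologicalSpace.denseSeq X) L).hasSum.add
    (hasSum_geometric_two.mul_right ε)
  have := hasSum_le (fun n => ?_) hsum hsum'
  · rw [whitneySize, whitneySize]
    linarith
  · rw [← mul_add]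
    exact mul_le_mul_of_nonneg_left (hle _) (by positivity)

theorem whitneySize_le_whitneySize (hK : K.Nonempty) (hKL : K ⊆ L) :
    whitneySize K ≤ whitneySize L := by
  simpa using whitneySize_le_add (ε := 0) hK fun z hz => ⟨z, hKL hz, (dist_self z).le⟩

end WhitneySize

section InitialSegment

/-- The initial segment, below the projection of `x`, of the arc `continuumHull a b` in a
hereditarily unicoherent Peano continuum. -/
def initialSegment {X : Type*} [TopologicalSpace X] (a b x : X) : Set X :=
  continuumHull a x ∩ continuumHull a b

section Topological

variable {X : Type*} [TopologicalSpace X] {a b x y : X}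

theorem isClosed_initialSegment : IsClosed (initialSegment a b x) :=
  isClosed_continuumHull.inter isClosed_continuumHull

theorem left_mem_initialSegment : a ∈ initialSegment a b x :=
  ⟨left_mem_continuumHull, left_mem_continuumHull⟩

theorem initialSegment_left [T1Space X] : initialSegment a b a = {a} := by
  rw [initialSegment, continuumHull_self, inter_eq_left, singleton_subset_iff]
  exact left_mem_continuumHull

theorem initialSegment_right : initialSegment a b b = continuumHull a b := inter_self _

variable [CompactSpace X] [T2Space X] [PreconnectedSpace X]

theorem isPreconnected_initialSegment (hX : IsHereditarilyUnicoherent X) :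
    IsPreconnected (initialSegment a b x) :=
  hX _ _ isClosed_continuumHull isClosed_continuumHull (isPreconnected_continuumHull hX)
    (isPreconnected_continuumHull hX)

theorem initialSegment_subset_union (hX : IsHereditarilyUnicoherent X) {S : Set X}
    (hS : IsClosed S) (hSc : IsPreconnected S) (hx : x ∈ S) (hy : y ∈ S) :
    initialSegment a b y ⊆ initialSegment a b x ∪ S ∩ continuumHull a b := by
  rw [initialSegment, initialSegment, ← union_inter_distrib_right]
  exact inter_subset_inter_left _ (continuumHull_subset_union hX hS hSc hx hy)

theorem eventually_initialSegment_eq [LocallyPathConnectedSpace X]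
    (hX : IsHereditarilyUnicoherent X) (hx : x ∉ continuumHull a b) :
    ∀ᶠ y in 𝓝 x, initialSegment a b y = initialSegment a b x := by
  filter_upwards [eventually_exists_isPreconnected_subset
    (isClosed_continuumHull.isOpen_compl.mem_nhds hx)] with y ⟨S, hSA, hS, hSc, hxS, hyS⟩
  have hempty : S ∩ continuumHull a b = ∅ := (disjoint_left.2 fun z hz => hSA hz).inter_eq
  have hsub : ∀ {u v}, u ∈ S → v ∈ S → initialSegment a b v ⊆ initialSegment a b u :=
    fun hu hv => by
      simpa only [hempty, union_empty] using
        initialSegment_subset_union (a := a) (b := b) hX hS hSc hu hv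
  exact (hsub hxS hyS).antisymm (hsub hyS hxS)

end Topological

variable {X : Type*} [MetricSpace X] [CompactSpace X] [PreconnectedSpace X] {a b x y : X}

theorem whitneySize_initialSegment_le_add [Nonempty X] (hX : IsHereditarilyUnicoherent X)
    {S : Set X} (hS : IsClosed S) (hSc : IsPreconnected S) (hx : x ∈ S) (hy : y ∈ S) {ε : ℝ}
    (hε : ∀ z ∈ S, ∀ t ∈ S, dist z t ≤ ε) :
    whitneySize (initialSegment a b y) ≤ whitneySize (initialSegment a b x) + 2 * ε := by
  refine whitneySize_le_add ⟨a, left_mem_initialSegment⟩ fun z hz => ?_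
  by_cases hzx : z ∈ initialSegment a b x
  · exact ⟨z, hzx, by simpa using hε x hx x hx⟩
  have hsub := initialSegment_subset_union (a := a) (b := b) hX hS hSc hx hy
  have hzS := (hsub hz).resolve_left hzx
  obtain ⟨t, -, htx, htS⟩ := isPreconnected_closed_iff.1 (isPreconnected_initialSegment hX) _ _
    isClosed_initialSegment (hS.inter isClosed_continuumHull) hsub
    ⟨a, left_mem_initialSegment, left_mem_initialSegment⟩ ⟨z, hz, hzS⟩
  exact ⟨t, htx, hε z hzS.1 t htS.1⟩

variable [LocallyPathConnectedSpace X]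

theorem continuous_whitneySize_initialSegment [Nonempty X] (hX : IsHereditarilyUnicoherent X) :
    Continuous fun x => whitneySize (initialSegment a b x) := by
  refine Metric.continuous_iff'.2 fun x ε hε => ?_
  filter_upwards [eventually_exists_isPreconnected_subset
    (closedBall_mem_nhds x (show 0 < ε / 8 by positivity))] with y ⟨S, hSx, hS, hSc, hxS, hyS⟩
  have hd : ∀ z ∈ S, ∀ t ∈ S, dist z t ≤ ε / 4 := fun z hz t ht => by
    linarith [dist_triangle_right z t x, mem_closedBall.1 (hSx hz), mem_closedBall.1 (hSx ht)]
  rw [Real.dist_eq, abs_sub_lt_iff]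
  constructor
  · linarith [whitneySize_initialSegment_le_add (a := a) (b := b) hX hS hSc hxS hyS hd]
  · linarith [whitneySize_initialSegment_le_add (a := a) (b := b) hX hS hSc hyS hxS hd]

theorem injOn_whitneySize_initialSegment [Nonempty X] (hX : IsHereditarilyUnicoherent X) :
    InjOn (fun x => whitneySize (initialSegment a b x)) (continuumHull a b) := by
  have eq_of_mem : ∀ {x y}, y ∈ continuumHull a b → x ∈ continuumHull a y →
      whitneySize (initialSegment a b x) = whitneySize (initialSegment a b y) → x = y := by
    intro x y hy hxy hw
    refine eq_of_mem_continuumHull_of_mem_continuumHull ?_ hxy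
    by_contra hyx
    refine (whitneySize_lt_whitneySize isClosed_initialSegment
      ⟨a, left_mem_initialSegment⟩ ⟨?_, fun h => ?_⟩).ne hw
    · exact inter_subset_inter_left _ (continuumHull_subset_continuumHull hX hxy)
    · exact hyx (h ⟨right_mem_continuumHull, hy⟩).1
  intro x hx y hy hxy
  rcases mem_continuumHull_or_mem_continuumHull hX hx hy with h | h
  · exact eq_of_mem hy h hxy
  · exact (eq_of_mem hx h hxy.symm).symm

theorem exists_isBranchProjection_unitInterval [Nontrivial X] (hX : IsHereditarilyUnicoherent X) :
    ∃ (ρ : X → I) (τ : I → X), IsBranchProjection ρ τ := by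
  obtain ⟨a, b, hab⟩ := exists_pair_ne X
  let w : X → ℝ := fun x => whitneySize (initialSegment a b x)
  have ha : ∀ x, w a ≤ w x := fun x => by
    simp only [w, initialSegment_left]
    exact whitneySize_le_whitneySize (singleton_nonempty a)
      (singleton_subset_iff.2 left_mem_initialSegment)
  have hb : ∀ x, w x ≤ w b := fun x => by
    simp only [w, initialSegment_right]
    exact whitneySize_le_whitneySize ⟨a, left_mem_initialSegment⟩ inter_subset_right
  have hinj : InjOn w (continuumHull a b) := injOn_whitneySize_initialSegment hX
  have hpos : 0 < w b - w a := sub_pos.2 <| (ha b).lt_of_ne fun h =>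
    hab (hinj left_mem_continuumHull right_mem_continuumHull h)
  let ρ : X → I := fun x => ⟨(w x - w a) / (w b - w a), div_nonneg (sub_nonneg.2 (ha x)) hpos.le,
    (div_le_one hpos).2 (sub_le_sub_right (hb x) _)⟩
  have hρ : Continuous ρ :=
    (((continuous_whitneySize_initialSegment hX).sub continuous_const).div_const _).subtype_mk _
  have hρa : ρ a = 0 := Subtype.ext (by simp [ρ])
  have hρb : ρ b = 1 := Subtype.ext (div_self hpos.ne')
  have hsurj : ∀ s, ∃ x ∈ continuumHull a b, ρ x = s := fun s =>
    (isPreconnected_continuumHull hX).intermediate_value left_mem_continuumHull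
      right_mem_continuumHull hρ.continuousOn ⟨hρa.trans_le unitInterval.nonneg',
        unitInterval.le_one'.trans_eq hρb.symm⟩
  choose τ hτ hρτ using hsurj
  refine ⟨ρ, τ, hρ, hρτ, fun x hx => ?_⟩
  have hx' : x ∉ continuumHull a b := fun hxA => hx ⟨ρ x, hinj (hτ _) hxA <|
    sub_left_injective <| (div_left_inj' hpos.ne').1 (congrArg Subtype.val (hρτ (ρ x)))⟩
  filter_upwards [eventually_initialSegment_eq hX hx'] with y hy
  simp only [ρ, w, hy]

end InitialSegment

theorem IsHereditarilyUnicoherent.isTopologicalFractal {X : Type*} [MetricSpace X] {h : C(I, X)}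
    (hs : Surjective h) (hX : IsHereditarilyUnicoherent X) : IsTopologicalFractal X := by
  have := hs.compactSpace h.continuous
  have : PathConnectedSpace I := isPathConnected_iff_pathConnectedSpace.1 <|
    (convex_Icc (0 : ℝ) 1).isPathConnected (nonempty_Icc.2 zero_le_one)
  have : LocallyPathConnectedSpace I := (convex_Icc (0 : ℝ) 1).locallyPathConnectedSpace
  have := hs.pathConnectedSpace h.continuous
  have := (h.continuous.isClosedMap.isQuotientMap h.continuous hs).locallyPathConnectedSpace
  rcases subsingleton_or_nontrivial X with hsub | hnt
  · refine ⟨{id}, finite_singleton _, forall_eq.2 continuous_id, fun ε hε => ⟨0, fun _ _ _ => ?_⟩,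
      by simp⟩
    rwa [diam_subsingleton subsingleton_of_subsingleton]
  · obtain ⟨ρ, τ, hρ⟩ := exists_isBranchProjection_unitInterval hX
    exact hρ.isTopologicalFractal hs

theorem planar_absolute_retract_is_topological_fractal_general {E : Type*} [NormedAddCommGroup E]
    [NormedSpace ℝ E] (hE : Module.finrank ℝ E = 2) {X : Set E} (hX : IsCompact X) (R : C(E, X))
    (hR : ∀ x : X, R x = x) : IsTopologicalFractal X := by
  have : FiniteDimensional ℝ E := .of_finrank_pos (hE ▸ two_pos)
  obtain ⟨h, hs⟩ := exists_surjective_path_of_retraction hX R hR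
  rcases (interior X).eq_empty_or_nonempty with hint | hint
  · exact (isHereditarilyUnicoherent_of_interior_eq_empty hE hX hint hR).isTopologicalFractal hs
  · exact isTopologicalFractal_of_interior_nonempty h hs hint

/-- Every planar absolute retract (a nonempty compact subset of the plane homeomorphic
to a retract of the Hilbert cube) is a topological fractal. -/
theorem planar_absolute_retract_is_topological_fractal
    (X : Set (ℝ × ℝ)) (hne : X.Nonempty) (hcomp : IsCompact X)
    (hAR : ∃ r : (ℕ → Set.Icc (0 : ℝ) 1) → (ℕ → Set.Icc (0 : ℝ) 1),
      Continuous r ∧ r ∘ r = r ∧ Nonempty (X ≃ₜ Set.range r)) :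
    ∃ F : Set (X → X), F.Finite ∧ (∀ f ∈ F, Continuous f) ∧
      TopContractive F ∧ (⋃ f ∈ F, Set.range f) = Set.univ := by
  obtain ⟨R, hR⟩ := exists_retraction_of_homeomorph_range hcomp.isClosed hAR
  exact planar_absolute_retract_is_topological_fractal_general (by simp) hcomp R hR
end
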